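/- arXiv:1604.06869 — 2 statements merged into one kernel-verified Lean document; each statement's English description precedes it below -/
import Mathlib

section
/- Let (1/2)P = {a/2 : a ∈ P}. Then: (1) every vector a ∈ (1/2)P with ⟨a,a⟩ = 1 is contained in exactly one C_8-frame; (2) the set {a ∈ (1/2)P : ⟨a,a⟩ = 1} is the disjoint union of all C_8-frames; (3) the number of C_8-frames is |𝒞_8| = 135. -/
noncomputable section

/-- `V = ℂ^8`. -/
abbrev V8 : Type := Fin 8 → ℂ

/-- The symmetric bilinear form `⟨x,y⟩ = ∑ᵢ xᵢ yᵢ` on `V`. -/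
def ip (x y : V8) : ℂ := ∑ i, x i * y i

/-- `φ = (1/2, …, 1/2)`. -/
def phi8 : V8 := fun _ => (1 : ℂ) / 2

/-- `x` has all coordinates in `ℤ`. -/
def IsIntVec (x : V8) : Prop := ∀ i, ∃ n : ℤ, x i = (n : ℂ)

/-- The `E₈` root lattice `P = {a ∈ ℤ⁸ ∪ (φ + ℤ⁸) : ⟨φ,a⟩ ∈ ℤ}`. -/
def E8lat : Set V8 :=
  {a | (IsIntVec a ∨ IsIntVec (a - phi8)) ∧ ∃ n : ℤ, ip phi8 a = (n : ℂ)}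

/-- A `C_l`-frame relative to `P`: a set `A = {±a₀, …, ±a_{l-1}}` with
`⟨aᵢ,aⱼ⟩ = δᵢⱼ`, `aᵢ ± aⱼ ∈ P` for `i < j`, and `2aᵢ ∈ P`. -/
def IsClFrame (l : ℕ) (A : Set V8) : Prop :=
  ∃ a : Fin l → V8,
    A = Set.range a ∪ Set.range (fun i => -a i) ∧
    (∀ i j, ip (a i) (a j) = if i = j then 1 else 0) ∧
    (∀ i j, i < j → a i + a j ∈ E8lat ∧ a i - a j ∈ E8lat) ∧
    (∀ i, (2 : ℂ) • a i ∈ E8lat)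

/-! Integer model: a vector `x : Fin 8 → ℤ` stands for `x / 4`. -/

def idot (x y : Fin 8 → ℤ) : ℤ :=
  x 0 * y 0 + x 1 * y 1 + x 2 * y 2 + x 3 * y 3 + x 4 * y 4 + x 5 * y 5 + x 6 * y 6 + x 7 * y 7

def isum (x : Fin 8 → ℤ) : ℤ := x 0 + x 1 + x 2 + x 3 + x 4 + x 5 + x 6 + x 7

/-- `x / 2` lies in the lattice. -/
def InL (x : Fin 8 → ℤ) : Prop := (∀ i, x i % 2 = x 0 % 2) ∧ isum x % 4 = 0

/-- `(x - y) / 4` lies in the lattice. -/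
def Cong (x y : Fin 8 → ℤ) : Prop :=
  (∀ i, (x i - y i) % 4 = (x 0 - y 0) % 4) ∧ (x 0 - y 0) % 2 = 0 ∧ (isum x - isum y) % 8 = 0

instance (x : Fin 8 → ℤ) : Decidable (InL x) := by unfold InL; infer_instance
instance (x y : Fin 8 → ℤ) : Decidable (Cong x y) := by unfold Cong; infer_instance

/-- The `k`-th binary digit. -/
def bt (n k : ℕ) : ℤ := ((n / 2 ^ k % 2 : ℕ) : ℤ)

/-- Last coordinate of the `D₇` part. -/
def zlast (n : ℕ) : ℤ :=
  2 * bt n 7 - (bt n 1 + bt n 2 + bt n 3 + bt n 4 + bt n 5 + bt n 6)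

/-- Representatives of the 256 classes modulo twice the lattice. -/
def rep (n : ℕ) : Fin 8 → ℤ :=
  ![bt n 0, bt n 0 + 2 * bt n 1, bt n 0 + 2 * bt n 2, bt n 0 + 2 * bt n 3,
    bt n 0 + 2 * bt n 4, bt n 0 + 2 * bt n 5, bt n 0 + 2 * bt n 6, bt n 0 + 2 * zlast n]

/-- The singular nonzero classes. -/
def Sing (n : ℕ) : Prop := n ≠ 0 ∧ idot (rep n) (rep n) % 16 = 0

instance (n : ℕ) : Decidable (Sing n) := by unfold Sing; infer_instance

/-- Parity (0 or 1) of the `i`-th coordinate of the `D₇` part. -/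
def par (n : ℕ) (i : ℕ) : ℕ :=
  if i = 0 then 0 else if i = 7 then (zlast n % 2).toNat else n / 2 ^ i % 2

/-- Number of `k < i` whose parity is `p`. -/
def rk (n p : ℕ) : ℕ → ℕ
  | 0 => 0
  | i + 1 => rk n p i + if par n i = p then 1 else 0

/-- Rows of the two `4 × 4` sign matrices. -/
def hd (t : ℤ) (j k : ℕ) : ℤ :=
  if t = 1 then (if j = k then -1 else 1)
  else if j = 0 ∨ k = 0 ∨ j = k then 1 else -1

/-- The frame attached to a singular class. -/
def fr (n : ℕ) (j i : Fin 8) : ℤ :=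
  if n % 2 = 1 then
    (if i = j then -3 else 1) * (if par n i = 0 then 1 else -1)
  else if n = 128 then (if i = j then 4 else 0)
  else
    let p := if j.val < 4 then 1 else 0
    if par n i = p then 2 * hd (bt n 7) (j.val % 4) (rk n p i.val) else 0

theorem sing_card : ((Finset.range 256).filter Sing).card = 135 := by decide +kernel

theorem idot_comm (x y : Fin 8 → ℤ) : idot x y = idot y x := by
  unfold idot; ring

theorem fr_cong : ∀ n : Fin 256, Sing n → ∀ j, Cong (fr n j) (rep n) := by decide +kernel

theorem fr_even : ∀ m : Fin 128, Sing (2 * m) → ∀ j i, j ≤ i →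
    idot (fr (2 * m) i) (fr (2 * m) j) = if j = i then 16 else 0 := by decide +kernel

theorem fr_odd (n : ℕ) (hn : n % 2 = 1) (i j : Fin 8) :
    idot (fr n i) (fr n j) = if i = j then 16 else 0 := by
  have key : ∀ e : Fin 8 → ℤ, (∀ k, e k * e k = 1) →
      idot (fun k => (if k = i then -3 else 1) * e k) (fun k => (if k = j then -3 else 1) * e k)
        = if i = j then 16 else 0 := by
    intro e he
    have h : ∀ (a b : ℤ) (k : Fin 8), (a * e k) * (b * e k) = a * b := by
      intro a b k
      linear_combination a * b * he k
    simp only [idot, h]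
    revert i j
    decide
  have := key (fun k => if par n k = 0 then 1 else -1) (by intro k; split_ifs <;> rfl)
  have e : ∀ j, fr n j =
      fun k => (if k = j then -3 else 1) * (if par n k = 0 then 1 else -1) := by
    intro j; funext k; simp only [fr, hn, if_true]
  rw [e, e]
  exact this

theorem fr_dot (n : ℕ) (hn : n < 256) (hs : Sing n) (i j : Fin 8) :
    idot (fr n i) (fr n j) = if i = j then 16 else 0 := by
  rcases Nat.mod_two_eq_zero_or_one n with h | h
  · obtain ⟨m, rfl⟩ : ∃ m, n = 2 * m := ⟨n / 2, by omega⟩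
    have hm := fr_even ⟨m, by omega⟩ hs
    dsimp only at hm
    rcases le_total j i with hij | hij
    · rw [hm j i hij]; simp only [eq_comm]
    · rw [idot_comm, hm i j hij]
  · exact fr_odd n h i j

theorem rep_inL (n : ℕ) : InL (rep n) := by
  constructor
  · intro i
    fin_cases i <;> simp [rep]
  · simp [isum, rep, zlast]; omega

theorem InL.of_cong {x y : Fin 8 → ℤ} (hy : InL y) (h : Cong x y) : InL x := by
  obtain ⟨h1, h2, h3⟩ := h
  obtain ⟨g1, g2⟩ := hy
  refine ⟨fun i => ?_, by omega⟩
  have := h1 i; have := g1 i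
  omega

theorem Cong.symm {x y : Fin 8 → ℤ} (h : Cong x y) : Cong y x := by
  obtain ⟨h1, h2, h3⟩ := h
  refine ⟨fun i => ?_, by omega, by omega⟩
  have := h1 i
  omega

theorem Cong.trans {x y z : Fin 8 → ℤ} (h : Cong x y) (g : Cong y z) : Cong x z := by
  obtain ⟨h1, h2, h3⟩ := h
  obtain ⟨g1, g2, g3⟩ := g
  refine ⟨fun i => ?_, by omega, by omega⟩
  have := h1 i; have := g1 i
  omega

theorem InL.neg {x : Fin 8 → ℤ} (h : InL x) : InL (-x) := by
  obtain ⟨h1, h2⟩ := h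
  refine ⟨fun i => ?_, ?_⟩
  · have := h1 i; simp only [Pi.neg_apply]; omega
  · simp only [isum, Pi.neg_apply] at *; omega

theorem cong_neg {x : Fin 8 → ℤ} (h : InL x) : Cong (-x) x := by
  obtain ⟨h1, h2⟩ := h
  refine ⟨fun i => ?_, ?_, ?_⟩
  · have := h1 i; simp only [Pi.neg_apply]; omega
  · simp only [Pi.neg_apply]; omega
  · simp only [isum, Pi.neg_apply] at *; omega

/-- Half-differences of congruent vectors. -/
theorem Cong.exists {x y : Fin 8 → ℤ} (h : Cong x y) :
    ∃ z, InL z ∧ ∀ i, x i - y i = 2 * z i := by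
  obtain ⟨h1, h2, h3⟩ := h
  have hz : ∀ i, ∃ w, x i - y i = 2 * w := fun i => ⟨(x i - y i) / 2, by have := h1 i; omega⟩
  choose z hz using hz
  refine ⟨z, ⟨fun i => ?_, ?_⟩, hz⟩
  · have := h1 i; have := hz i; have := hz 0; omega
  · have : isum x - isum y = 2 * isum z := by
      simp only [isum]; linarith [hz 0, hz 1, hz 2, hz 3, hz 4, hz 5, hz 6, hz 7]
    omega

theorem Cong.of_exists {x y z : Fin 8 → ℤ} (hz : InL z) (h : ∀ i, x i - y i = 2 * z i) :
    Cong x y := by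
  obtain ⟨h1, h2⟩ := hz
  refine ⟨fun i => ?_, ?_, ?_⟩
  · have := h1 i; have := h i; have := h 0; omega
  · have := h 0; omega
  · have : isum x - isum y = 2 * isum z := by
      simp only [isum]; linarith [h 0, h 1, h 2, h 3, h 4, h 5, h 6, h 7]
    omega

theorem InL.norm {z : Fin 8 → ℤ} (h : InL z) : idot z z % 8 = 0 := by
  obtain ⟨h1, h2⟩ := h
  rcases Int.emod_two_eq_zero_or_one (z 0) with h0 | h0
  · have key : ∀ i, ∃ w, z i = 2 * w := fun i => ⟨z i / 2, by have := h1 i; omega⟩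
    have sq : ∀ i, (z i * z i) % 8 = (2 * z i) % 8 := by
      intro i
      obtain ⟨w, hw⟩ := key i
      have := Int.even_mul_succ_self (w - 1)
      obtain ⟨v, hv⟩ := this
      have : z i * z i = 2 * z i + 8 * v := by rw [hw]; linear_combination 4 * hv
      omega
    have a0 := sq 0; have a1 := sq 1; have a2 := sq 2; have a3 := sq 3; have a4 := sq 4
    have a5 := sq 5; have a6 := sq 6; have a7 := sq 7
    simp only [isum, idot] at *; omega
  · have sq : ∀ i, (z i * z i) % 8 = 1 := by
      intro i
      obtain ⟨w, hw⟩ : ∃ w, z i = 2 * w + 1 := ⟨z i / 2, by have := h1 i; omega⟩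
      obtain ⟨v, hv⟩ := Int.even_mul_succ_self w
      have : z i * z i = 1 + 8 * v := by rw [hw]; linear_combination 4 * hv
      omega
    have a0 := sq 0; have a1 := sq 1; have a2 := sq 2; have a3 := sq 3; have a4 := sq 4
    have a5 := sq 5; have a6 := sq 6; have a7 := sq 7
    simp only [idot] at *; omega

theorem InL.add {x y : Fin 8 → ℤ} (hx : InL x) (hy : InL y) : InL (x + y) := by
  obtain ⟨h1, h2⟩ := hx
  obtain ⟨g1, g2⟩ := hy
  refine ⟨fun i => ?_, ?_⟩
  · have := h1 i; have := g1 i; simp only [Pi.add_apply]; omega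
  · simp only [isum, Pi.add_apply] at *; omega

theorem InL.dot {x y : Fin 8 → ℤ} (hx : InL x) (hy : InL y) : idot x y % 4 = 0 := by
  have h1 := hx.norm
  have h2 := hy.norm
  have h3 := (hx.add hy).norm
  have : idot (x + y) (x + y) = idot x x + idot y y + 2 * idot x y := by
    simp only [idot, Pi.add_apply]; ring
  omega

theorem idot_self_eq_zero {x : Fin 8 → ℤ} (h : idot x x = 0) : x = 0 := by
  have p : ∀ i, 0 ≤ x i * x i := fun i => mul_self_nonneg _
  have p0 := p 0; have p1 := p 1; have p2 := p 2; have p3 := p 3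
  have p4 := p 4; have p5 := p 5; have p6 := p 6; have p7 := p 7
  unfold idot at h
  funext i
  have : x i * x i = 0 := by
    fin_cases i <;> dsimp <;> linarith
  simpa using this

theorem idot_self_nonneg (x : Fin 8 → ℤ) : 0 ≤ idot x x := by
  have p : ∀ i, 0 ≤ x i * x i := fun i => mul_self_nonneg _
  have p0 := p 0; have p1 := p 1; have p2 := p 2; have p3 := p 3
  have p4 := p 4; have p5 := p 5; have p6 := p 6; have p7 := p 7
  unfold idot; linarith

/-- Congruent minimal vectors are equal, opposite or orthogonal. -/
theorem trichotomy {x y : Fin 8 → ℤ} (hx : idot x x = 16) (hy : idot y y = 16) (h : Cong x y) :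
    x = y ∨ x = -y ∨ idot x y = 0 := by
  obtain ⟨z, hz, hxy⟩ := h.exists
  have hn := hz.norm
  have e1 : idot (x - y) (x - y) = idot x x + idot y y - 2 * idot x y := by
    simp only [idot, Pi.sub_apply]; ring
  have e2 : idot (x + y) (x + y) = idot x x + idot y y + 2 * idot x y := by
    simp only [idot, Pi.add_apply]; ring
  have e3 : idot (x - y) (x - y) = 4 * idot z z := by
    simp only [idot, Pi.sub_apply, hxy]; ring
  have n1 := idot_self_nonneg (x - y)
  have n2 := idot_self_nonneg (x + y)
  have : idot x y = 16 ∨ idot x y = -16 ∨ idot x y = 0 := by omega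
  rcases this with h | h | h
  · left
    exact sub_eq_zero.mp (idot_self_eq_zero (by omega))
  · right; left
    exact eq_neg_of_add_eq_zero_left (idot_self_eq_zero (by omega))
  · exact Or.inr (Or.inr h)

theorem bt_cases (n k : ℕ) : bt n k = 0 ∨ bt n k = 1 := by
  unfold bt; omega

theorem bits : ∀ c0 c1 c2 c3 c4 c5 c6 c7 : ℤ, ∃ n < 256, bt n 0 = c0 % 2 ∧ bt n 1 = c1 % 2 ∧
      bt n 2 = c2 % 2 ∧ bt n 3 = c3 % 2 ∧ bt n 4 = c4 % 2 ∧ bt n 5 = c5 % 2 ∧ bt n 6 = c6 % 2 ∧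
      bt n 7 = c7 % 2 := by
    intro c0 c1 c2 c3 c4 c5 c6 c7
    refine ⟨(c0 % 2 + 2 * (c1 % 2) + 4 * (c2 % 2) + 8 * (c3 % 2) + 16 * (c4 % 2) + 32 * (c5 % 2)
      + 64 * (c6 % 2) + 128 * (c7 % 2)).toNat, by omega, ?_⟩
    unfold bt
    norm_num
    refine ⟨?_, ?_, ?_, ?_, ?_, ?_, ?_, ?_⟩ <;> omega

/-- Every lattice vector is congruent to some representative. -/
theorem exists_rep {x : Fin 8 → ℤ} (hx : InL x) : ∃ n < 256, Cong x (rep n) := by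
  obtain ⟨h1, h2⟩ := hx
  have hz : ∀ i, ∃ w, x i = x 0 + 2 * w := fun i => ⟨(x i - x 0) / 2, by have := h1 i; omega⟩
  choose z hz using hz
  obtain ⟨t, ht⟩ : ∃ t, isum x = 8 * x 0 + 4 * t := ⟨(isum x - 8 * x 0) / 4, by omega⟩
  have z1 := hz 1; have z2 := hz 2; have z3 := hz 3; have z4 := hz 4
  have z5 := hz 5; have z6 := hz 6; have z7 := hz 7
  have hs : z 7 = 2 * t - (z 1 + z 2 + z 3 + z 4 + z 5 + z 6) := by
    simp only [isum] at ht; linarith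
  have half : ∀ b c : ℤ, b = c % 2 → ∃ q, b = c - 2 * q := fun b c h => ⟨c / 2, by omega⟩
  obtain ⟨n, hn, b0, b1, b2, b3, b4, b5, b6, b7⟩ :=
    bits (x 0) (z 1) (z 2) (z 3) (z 4) (z 5) (z 6) t
  obtain ⟨q0, b0⟩ := half _ _ b0
  obtain ⟨q1, b1⟩ := half _ _ b1
  obtain ⟨q2, b2⟩ := half _ _ b2
  obtain ⟨q3, b3⟩ := half _ _ b3
  obtain ⟨q4, b4⟩ := half _ _ b4
  obtain ⟨q5, b5⟩ := half _ _ b5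
  obtain ⟨q6, b6⟩ := half _ _ b6
  obtain ⟨q7, b7⟩ := half _ _ b7
  have hr : isum (rep n) = 8 * bt n 0 + 4 * bt n 7 := by
    simp [isum, rep, zlast]; ring
  obtain ⟨w, hw⟩ : ∃ w : Fin 8 → ℤ, ∀ i, x i - rep n i = 2 * q0 + 4 * w i := by
    refine ⟨![0, q1, q2, q3, q4, q5, q6, 2 * q7 - (q1 + q2 + q3 + q4 + q5 + q6)], ?_⟩
    clear h1 h2 hz half hr ht
    intro i
    fin_cases i <;> simp [rep, zlast] <;> linarith
  refine ⟨n, hn, ?_, ?_, ?_⟩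
  · intro i
    have := hw i
    have := hw 0
    clear * - this hw
    have := hw i
    omega
  · have := hw 0
    clear * - this
    omega
  · rw [hr, ht, b0, b7]; clear * -; omega

theorem rep_inj {n m : ℕ} (hn : n < 256) (hm : m < 256) (h : Cong (rep n) (rep m)) : n = m := by
  obtain ⟨h1, h2, h3⟩ := h
  have a1 := h1 1; have a2 := h1 2; have a3 := h1 3; have a4 := h1 4; have a5 := h1 5
  have a6 := h1 6; have a7 := h1 7
  have hr : ∀ n, isum (rep n) = 8 * bt n 0 + 4 * bt n 7 := by
    intro n; simp [isum, rep, zlast]; ring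
  rw [hr, hr] at h3
  replace h2 : (bt n 0 - bt m 0) % 2 = 0 := by simpa [rep] using h2
  simp [rep] at a1 a2 a3 a4 a5 a6
  have fin2 : ∀ k, (bt n k - bt m k) % 2 = 0 → bt n k = bt m k := by
    intro k hk
    have c := bt_cases n k
    have d := bt_cases m k
    clear * - hk c d
    omega
  have e0 : bt n 0 = bt m 0 := fin2 0 h2
  have step : ∀ k, (bt n 0 + 2 * bt n k - (bt m 0 + 2 * bt m k)) % 4 = (bt n 0 - bt m 0) % 4 →
      bt n k = bt m k := fun k hk => fin2 k (by rw [e0] at hk; omega)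
  have e1 := step 1 a1
  have e2 := step 2 a2
  have e3 := step 3 a3
  have e4 := step 4 a4
  have e5 := step 5 a5
  have e6 := step 6 a6
  have e7 : bt n 7 = bt m 7 := fin2 7 (by rw [e0] at h3; omega)
  clear a1 a2 a3 a4 a5 a6 a7 h1 h2 h3 hr fin2 step
  unfold bt at *
  norm_num at *
  omega

theorem sing_of_cong {x : Fin 8 → ℤ} (h16 : idot x x = 16) {n : ℕ}
    (h : Cong x (rep n)) : Sing n := by
  obtain ⟨z, hz, hxz⟩ := h.exists
  have e : idot x x = idot (rep n) (rep n) + 4 * idot (rep n) z + 4 * idot z z := by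
    have : ∀ i, x i = rep n i + 2 * z i := fun i => by have := hxz i; omega
    simp only [idot, this]; ring
  have h1 := (rep_inL n).dot hz
  have h2 := hz.norm
  refine ⟨?_, by omega⟩
  rintro rfl
  have : rep 0 = 0 := by decide
  rw [this] at e
  have q0 : idot 0 (0 : Fin 8 → ℤ) = 0 := by simp [idot]
  have q1 : idot 0 z = 0 := by simp [idot]
  omega

/-- Integer model of a frame. -/
def IFrame (f : Fin 8 → Fin 8 → ℤ) : Prop :=
  (∀ i, InL (f i)) ∧ (∀ i j, idot (f i) (f j) = if i = j then 16 else 0) ∧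
    ∀ i j, Cong (f i) (f j)

theorem fr_frame {n : ℕ} (hn : n < 256) (hs : Sing n) : IFrame (fr n) := by
  have hc := fr_cong ⟨n, hn⟩ hs
  exact ⟨fun i => (rep_inL n).of_cong (hc i), fr_dot n hn hs, fun i j => (hc i).trans (hc j).symm⟩

theorem IFrame.mem {f : Fin 8 → Fin 8 → ℤ} (hf : IFrame f) {x : Fin 8 → ℤ}
    (hx : idot x x = 16) {k : Fin 8} (hc : Cong x (f k)) : ∃ j, x = f j ∨ x = -f j := by
  obtain ⟨h1, h2, h3⟩ := hf
  by_contra hcon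
  push Not at hcon
  have ho : ∀ j, idot (f j) x = 0 := by
    intro j
    rcases trichotomy hx (by simpa using h2 j j) (hc.trans (h3 k j)) with h | h | h
    · exact absurd h (hcon j).1
    · exact absurd h (hcon j).2
    · rw [idot_comm]; exact h
  let M : Matrix (Fin 8) (Fin 8) ℚ := Matrix.of fun i j => (f i j : ℚ)
  have hM : M * ((1 / 16 : ℚ) • M.transpose) = 1 := by
    ext i j
    have := h2 i j
    have h' : ((idot (f i) (f j) : ℤ) : ℚ) = if i = j then 16 else 0 := by
      rw [this]; split_ifs <;> simp
    rw [Matrix.mul_smul, Matrix.smul_apply, Matrix.mul_apply, Fin.sum_univ_eight, Matrix.one_apply]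
    simp only [idot] at h'
    push_cast at h'
    simp only [M, Matrix.transpose_apply, Matrix.of_apply, smul_eq_mul, h']
    split_ifs <;> norm_num
  have hM' := mul_eq_one_comm.mp hM
  have hv : M.mulVec (fun i => (x i : ℚ)) = 0 := by
    ext i
    have h' : ((idot (f i) x : ℤ) : ℚ) = 0 := by rw [ho i]; simp
    simp only [idot] at h'
    push_cast at h'
    simpa [Matrix.mulVec, dotProduct, Fin.sum_univ_eight, M] using h'
  have hz : (fun i => (x i : ℚ)) = 0 := by
    rw [← Matrix.one_mulVec (fun i => (x i : ℚ)), ← hM', ← Matrix.mulVec_mulVec, hv,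
      Matrix.mulVec_zero]
  have : x = 0 := by
    funext i
    have := congrFun hz i
    simpa using this
  subst this
  simp [idot] at hx

/-- Embedding of the integer model. -/
def emb (x : Fin 8 → ℤ) : V8 := fun i => (x i : ℂ) / 4

theorem emb_inj {x y : Fin 8 → ℤ} (h : emb x = emb y) : x = y := by
  funext i
  have := congrFun h i
  simp only [emb] at this
  have h4 : (4 : ℂ) ≠ 0 := by norm_num
  rw [div_left_inj' h4] at this
  exact_mod_cast this

theorem emb_neg (x : Fin 8 → ℤ) : emb (-x) = -emb x := by
  funext i; simp [emb]; ring

theorem ip_emb (x y : Fin 8 → ℤ) : ip (emb x) (emb y) = (idot x y : ℂ) / 16 := by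
  simp only [ip, emb, idot, Fin.sum_univ_eight]; push_cast; ring

theorem mem_E8 (v : V8) : v ∈ E8lat ↔ ∃ x, InL x ∧ ∀ i, v i = (x i : ℂ) / 2 := by
  constructor
  · rintro ⟨h | h, m, hm⟩
    · choose n hn using h
      refine ⟨fun i => 2 * n i, ⟨fun i => by dsimp only; omega, ?_⟩, fun i => by
        rw [hn i]; push_cast; ring⟩
      simp only [ip, phi8, Fin.sum_univ_eight, hn] at hm
      have : (isum n : ℂ) = ((2 * m : ℤ) : ℂ) := by
        simp only [isum]; push_cast; linear_combination 2 * hm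
      have : isum n = 2 * m := by exact_mod_cast this
      simp only [isum] at *; omega
    · choose n hn using h
      have hn' : ∀ i, v i = (n i : ℂ) + 1 / 2 := fun i => by
        have := hn i; simp only [Pi.sub_apply, phi8] at this; linear_combination this
      refine ⟨fun i => 2 * n i + 1, ⟨fun i => by dsimp only; omega, ?_⟩, fun i => by
        rw [hn' i]; push_cast; ring⟩
      simp only [ip, phi8, Fin.sum_univ_eight, hn'] at hm
      have : (isum n : ℂ) = ((2 * m - 4 : ℤ) : ℂ) := by
        simp only [isum]; push_cast; linear_combination 2 * hm
      have : isum n = 2 * m - 4 := by exact_mod_cast this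
      simp only [isum] at *; omega
  · rintro ⟨x, ⟨h1, h2⟩, hx⟩
    refine ⟨?_, isum x / 4, ?_⟩
    · rcases Int.emod_two_eq_zero_or_one (x 0) with h0 | h0
      · left
        intro i
        obtain ⟨w, hw⟩ : ∃ w, x i = 2 * w := ⟨x i / 2, by have := h1 i; omega⟩
        exact ⟨w, by rw [hx, hw]; push_cast; ring⟩
      · right
        intro i
        obtain ⟨w, hw⟩ : ∃ w, x i = 2 * w + 1 := ⟨x i / 2, by have := h1 i; omega⟩
        exact ⟨w, by rw [Pi.sub_apply, hx, hw, phi8]; push_cast; ring⟩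
    · obtain ⟨m, hm⟩ : ∃ m, isum x = 4 * m := ⟨isum x / 4, by omega⟩
      have h4 : isum x / 4 = m := by omega
      rw [h4]
      have : (isum x : ℂ) = 4 * m := by rw [hm]; push_cast; ring
      simp only [isum] at this
      push_cast at this
      simp only [ip, phi8, Fin.sum_univ_eight, hx]
      linear_combination this / 4

theorem two_mem (v : V8) : (2 : ℂ) • v ∈ E8lat ↔ ∃ x, InL x ∧ v = emb x := by
  rw [mem_E8]
  refine exists_congr fun x => and_congr_right fun _ => ?_
  rw [funext_iff]
  refine forall_congr' fun i => ?_
  simp only [Pi.smul_apply, smul_eq_mul, emb]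
  constructor <;> intro h
  · linear_combination h / 2
  · linear_combination 2 * h

theorem emb_sub_mem (x y : Fin 8 → ℤ) : emb x - emb y ∈ E8lat ↔ Cong x y := by
  rw [mem_E8]
  have key : ∀ (z : Fin 8 → ℤ) i,
      (emb x - emb y) i = (z i : ℂ) / 2 ↔ x i - y i = 2 * z i := by
    intro z i
    rw [← Int.cast_inj (α := ℂ)]
    simp only [Pi.sub_apply, emb]
    push_cast
    constructor <;> intro h
    · linear_combination 4 * h
    · linear_combination h / 4
  simp only [key]
  exact ⟨fun ⟨z, hz, h⟩ => Cong.of_exists hz h, fun h => h.exists⟩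

theorem frame_iff (A : Set V8) : IsClFrame 8 A ↔
    ∃ f, IFrame f ∧ A = {v | ∃ j, v = emb (f j) ∨ v = emb (-f j)} := by
  have hset : ∀ f : Fin 8 → Fin 8 → ℤ,
      Set.range (fun i => emb (f i)) ∪ Set.range (fun i => -emb (f i)) =
        {v | ∃ j, v = emb (f j) ∨ v = emb (-f j)} := by
    intro f
    ext v
    simp only [Set.mem_union, Set.mem_range, Set.mem_ofPred_eq, emb_neg, ← exists_or, eq_comm]
  constructor
  · rintro ⟨a, rfl, hip, hpm, h2⟩
    choose f hf1 hf2 using fun i => (two_mem (a i)).mp (h2 i)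
    obtain rfl : a = fun i => emb (f i) := funext hf2
    refine ⟨f, ⟨hf1, fun i j => ?_, fun i j => ?_⟩, hset f⟩
    · have := hip i j
      rw [ip_emb] at this
      have h' : ((idot (f i) (f j) : ℤ) : ℂ) = ((if i = j then 16 else 0 : ℤ) : ℂ) := by
        split_ifs at this ⊢ <;> push_cast <;> linear_combination 16 * this
      exact_mod_cast h'
    · rcases lt_trichotomy i j with h | h | h
      · exact (emb_sub_mem _ _).mp (hpm i j h).2
      · subst h; exact (cong_neg (hf1 i)).symm.trans (cong_neg (hf1 i))
      · exact ((emb_sub_mem _ _).mp (hpm j i h).2).symm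
  · rintro ⟨f, ⟨h1, h2, h3⟩, rfl⟩
    refine ⟨fun i => emb (f i), (hset f).symm, fun i j => ?_, fun i j _ => ⟨?_, ?_⟩, fun i => ?_⟩
    · rw [ip_emb, h2]; split_ifs <;> norm_num
    · have := (emb_sub_mem (f i) (-f j)).mpr ((h3 i j).trans (cong_neg (h1 j)).symm)
      simpa [emb_neg] using this
    · exact (emb_sub_mem _ _).mpr (h3 i j)
    · exact (two_mem _).mpr ⟨f i, h1 i, rfl⟩

/-- The subset of `V` attached to an integer frame. -/
def fset (f : Fin 8 → Fin 8 → ℤ) : Set V8 := {v | ∃ j, v = emb (f j) ∨ v = emb (-f j)}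

theorem idot_neg_neg (x : Fin 8 → ℤ) : idot (-x) (-x) = idot x x := by
  simp [idot]

theorem IFrame.mem_fset {f : Fin 8 → Fin 8 → ℤ} (hf : IFrame f) (v : V8) (k : Fin 8) :
    v ∈ fset f ↔ ∃ x, v = emb x ∧ InL x ∧ idot x x = 16 ∧ Cong x (f k) := by
  constructor
  · rintro ⟨j, rfl | rfl⟩
    · exact ⟨f j, rfl, hf.1 j, by simpa using hf.2.1 j j, hf.2.2 j k⟩
    · exact ⟨-f j, rfl, (hf.1 j).neg, by rw [idot_neg_neg]; simpa using hf.2.1 j j,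
        (cong_neg (hf.1 j)).trans (hf.2.2 j k)⟩
  · rintro ⟨x, rfl, _, hx, hc⟩
    obtain ⟨j, h | h⟩ := hf.mem hx hc
    · exact ⟨j, Or.inl (by rw [h])⟩
    · exact ⟨j, Or.inr (by rw [h])⟩

theorem fset_eq {f g : Fin 8 → Fin 8 → ℤ} (hf : IFrame f) (hg : IFrame g)
    (h : Cong (f 0) (g 0)) : fset f = fset g := by
  ext v
  rw [hf.mem_fset v 0, hg.mem_fset v 0]
  refine exists_congr fun x => ?_
  have : Cong x (f 0) ↔ Cong x (g 0) := ⟨fun k => k.trans h, fun k => k.trans h.symm⟩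
  rw [this]

theorem cong_of_mem {f g : Fin 8 → Fin 8 → ℤ} (hf : IFrame f) (hg : IFrame g) {v : V8}
    (h1 : v ∈ fset f) (h2 : v ∈ fset g) : Cong (f 0) (g 0) := by
  obtain ⟨x, rfl, _, _, hx⟩ := (hf.mem_fset v 0).mp h1
  obtain ⟨y, hy, _, _, hy'⟩ := (hg.mem_fset _ 0).mp h2
  have := emb_inj hy
  subst this
  exact hx.symm.trans hy'

theorem frame_unique {A B : Set V8} (hA : IsClFrame 8 A) (hB : IsClFrame 8 B) {v : V8}
    (h1 : v ∈ A) (h2 : v ∈ B) : A = B := by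
  obtain ⟨f, hf, rfl⟩ := (frame_iff A).mp hA
  obtain ⟨g, hg, rfl⟩ := (frame_iff B).mp hB
  exact fset_eq hf hg (cong_of_mem hf hg h1 h2)

theorem exists_fr {x : Fin 8 → ℤ} (hL : InL x) (hx : idot x x = 16) :
    ∃ n < 256, Sing n ∧ emb x ∈ fset (fr n) := by
  obtain ⟨n, hn, hc⟩ := exists_rep hL
  have hs := sing_of_cong hx hc
  refine ⟨n, hn, hs, ((fr_frame hn hs).mem_fset _ 0).mpr ⟨x, rfl, hL, hx, ?_⟩⟩
  exact hc.trans (fr_cong ⟨n, hn⟩ hs 0).symm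

theorem fr_isFrame {n : ℕ} (hn : n < 256) (hs : Sing n) : IsClFrame 8 (fset (fr n)) :=
  (frame_iff _).mpr ⟨_, fr_frame hn hs, rfl⟩

theorem idot_of_ip {x : Fin 8 → ℤ} (h : ip (emb x) (emb x) = 1) : idot x x = 16 := by
  rw [ip_emb] at h
  have : (idot x x : ℂ) = ((16 : ℤ) : ℂ) := by push_cast; linear_combination 16 * h
  exact_mod_cast this

theorem exists_frame (a : V8) (h2 : (2 : ℂ) • a ∈ E8lat) (h1 : ip a a = 1) :
    ∃ A, IsClFrame 8 A ∧ a ∈ A := by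
  obtain ⟨x, hx, rfl⟩ := (two_mem a).mp h2
  obtain ⟨n, hn, hs, hm⟩ := exists_fr hx (idot_of_ip h1)
  exact ⟨_, fr_isFrame hn hs, hm⟩

theorem frames_eq : {A : Set V8 | IsClFrame 8 A} =
    (fun n => fset (fr n)) '' (((Finset.range 256).filter Sing : Finset ℕ) : Set ℕ) := by
  ext A
  simp only [Set.mem_ofPred_eq, Set.mem_image, Finset.coe_filter, Finset.mem_range]
  constructor
  · intro hA
    obtain ⟨f, hf, hAf⟩ := (frame_iff A).mp hA
    obtain ⟨n, hn, hs, hm⟩ := exists_fr (hf.1 0) (by simpa using hf.2.1 0 0)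
    refine ⟨n, ⟨hn, hs⟩, frame_unique (fr_isFrame hn hs) hA hm ?_⟩
    rw [hAf]
    exact ⟨0, Or.inl rfl⟩
  · rintro ⟨n, ⟨hn, hs⟩, rfl⟩
    exact fr_isFrame hn hs

theorem fset_injOn : Set.InjOn (fun n => fset (fr n))
    (((Finset.range 256).filter Sing : Finset ℕ) : Set ℕ) := by
  intro n hn m hm h
  simp only [Finset.coe_filter, Finset.mem_range, Set.mem_ofPred_eq] at hn hm
  dsimp only at h
  have hmem : emb (fr n 0) ∈ fset (fr n) := ⟨0, Or.inl rfl⟩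
  have hc := cong_of_mem (fr_frame hn.1 hn.2) (fr_frame hm.1 hm.2) hmem (h ▸ hmem)
  exact rep_inj hn.1 hm.1
    (((fr_cong ⟨n, hn.1⟩ hn.2 0).symm.trans hc).trans (fr_cong ⟨m, hm.1⟩ hm.2 0))

/-- Proposition 1.2: (1) every `a ∈ (1/2)P` with `⟨a,a⟩ = 1` lies in a unique `C₈`-frame;
(2) the set `{a ∈ (1/2)P : ⟨a,a⟩ = 1}` is the disjoint union of all `C₈`-frames;
(3) there are exactly `135` `C₈`-frames. -/
theorem statement0 :
    (∀ a : V8, (2 : ℂ) • a ∈ E8lat → ip a a = 1 →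
      ∃! A : Set V8, IsClFrame 8 A ∧ a ∈ A) ∧
    (⋃₀ {A : Set V8 | IsClFrame 8 A} = {a : V8 | (2 : ℂ) • a ∈ E8lat ∧ ip a a = 1}) ∧
    ({A : Set V8 | IsClFrame 8 A}.Pairwise fun A B => Disjoint A B) ∧
    {A : Set V8 | IsClFrame 8 A}.ncard = 135 := by
  refine ⟨fun a h2 h1 => ?_, ?_, ?_, ?_⟩
  · obtain ⟨A, hA, ha⟩ := exists_frame a h2 h1
    exact ⟨A, ⟨hA, ha⟩, fun B hB => frame_unique hB.1 hA hB.2 ha⟩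
  · ext a
    simp only [Set.mem_sUnion, Set.mem_ofPred_eq]
    constructor
    · rintro ⟨A, hA, ha⟩
      obtain ⟨f, hf, rfl⟩ := (frame_iff A).mp hA
      obtain ⟨x, rfl, hL, hx, _⟩ := (hf.mem_fset a 0).mp ha
      refine ⟨(two_mem _).mpr ⟨x, hL, rfl⟩, ?_⟩
      rw [ip_emb, hx]; norm_num
    · rintro ⟨h2, h1⟩
      exact exists_frame a h2 h1
  · intro A hA B hB hne
    rw [Set.disjoint_left]
    intro v h1 h2
    exact hne (frame_unique hA hB h1 h2)
  · rw [frames_eq, Set.InjOn.ncard_image fset_injOn, Set.ncard_coe_finset, sing_card]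
end
end

section
/- Call a C_8-frame A of type I if ⟨φ,a⟩ ∈ {1/2, −1/2} for every a ∈ A, and of type II if the multiset {⟨φ,a⟩ : a ∈ A} equals {1, 1, −1, −1} together with twelve 0's. Then: (1) every C_8-frame is either of type I or of type II; (2) the set 𝒞_{8,I} of type-I C_8-frames has exactly 72 elements and the set 𝒞_{8,II} of type-II C_8-frames has exactly 63 elements; (3) each of 𝒞_{8,I} and 𝒞_{8,II} is a single orbit under the action of W(E7) on C_8-frames given by A ↦ w(A). -/
noncomputable section

/-- `w` is the reflection `r_α(v) = v − ⟨α,v⟩α` for some root `α ∈ Δ(E₇)`,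
i.e. `α ∈ Δ(E₈)` with `⟨φ,α⟩ = 0`. -/
def IsE7Reflection (w : V8 ≃ₗ[ℂ] V8) : Prop :=
  ∃ α, α ∈ E8lat ∧ ip α α = 2 ∧ ip phi8 α = 0 ∧ ∀ v, w v = v - ip α v • α

/-- The Weyl group `W(E₇)`, generated by the reflections in roots of `Δ(E₇)`. -/
def WE7 : Subgroup (V8 ≃ₗ[ℂ] V8) := Subgroup.closure {w | IsE7Reflection w}

/-- A `C₈`-frame of type I: all values `⟨φ,a⟩` (`a ∈ A`) lie in `{1/2, −1/2}`. -/
def C8TypeI (A : Set V8) : Prop :=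
  ∀ a ∈ A, ip phi8 a = 1 / 2 ∨ ip phi8 a = -(1 / 2)

/-- A `C₈`-frame of type II: the multiset `{⟨φ,a⟩ : a ∈ A}` consists of `1` twice,
`−1` twice and `0` twelve times. -/
def C8TypeII (A : Set V8) : Prop :=
  {a ∈ A | ip phi8 a = 1}.ncard = 2 ∧ {a ∈ A | ip phi8 a = -1}.ncard = 2 ∧
  {a ∈ A | ip phi8 a = 0}.ncard = 12


/-! ### The bilinear form and the lattice -/

theorem ip_add_left (x y z : V8) : ip (x + y) z = ip x z + ip y z := by
  simp [ip, add_mul, Finset.sum_add_distrib]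

theorem ip_comm (x y : V8) : ip x y = ip y x := by
  simp [ip, mul_comm]

theorem ip_smul_left (c : ℂ) (x y : V8) : ip (c • x) y = c * ip x y := by
  simp [ip, Finset.mul_sum, mul_assoc]

theorem ip_add_right (x y z : V8) : ip x (y + z) = ip x y + ip x z := by
  rw [ip_comm, ip_add_left, ip_comm y, ip_comm z]

theorem ip_smul_right (c : ℂ) (x y : V8) : ip x (c • y) = c * ip x y := by
  rw [ip_comm, ip_smul_left, ip_comm]

theorem ip_neg_left (x y : V8) : ip (-x) y = - ip x y := by
  simp [ip]

theorem ip_neg_right (x y : V8) : ip x (-y) = - ip x y := by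
  simp [ip]

theorem ip_sub_left (x y z : V8) : ip (x - y) z = ip x z - ip y z := by
  rw [sub_eq_add_neg, ip_add_left, ip_neg_left, sub_eq_add_neg]

theorem ip_sub_right (x y z : V8) : ip x (y - z) = ip x y - ip x z := by
  rw [sub_eq_add_neg, ip_add_right, ip_neg_right, sub_eq_add_neg]

theorem ip_phi_phi : ip phi8 phi8 = 2 := by
  simp [ip, phi8]; norm_num

theorem isInt_add {x y : V8} (hx : IsIntVec x) (hy : IsIntVec y) : IsIntVec (x + y) := by
  intro i
  obtain ⟨n, hn⟩ := hx i
  obtain ⟨m, hm⟩ := hy i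
  exact ⟨n + m, by simp [hn, hm]⟩

theorem isInt_neg {x : V8} (hx : IsIntVec x) : IsIntVec (-x) := by
  intro i
  obtain ⟨n, hn⟩ := hx i
  exact ⟨-n, by simp [hn]⟩

theorem isInt_two_phi : IsIntVec (phi8 + phi8) := by
  intro i
  exact ⟨1, by simp [phi8]; norm_num⟩

theorem lat_zero : (0 : V8) ∈ E8lat :=
  ⟨Or.inl fun _ => ⟨0, by simp⟩, 0, by simp [ip]⟩

theorem lat_add {x y : V8} (hx : x ∈ E8lat) (hy : y ∈ E8lat) : x + y ∈ E8lat := by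
  obtain ⟨hx, n, hn⟩ := hx
  obtain ⟨hy, m, hm⟩ := hy
  refine ⟨?_, n + m, by rw [ip_add_right, hn, hm]; push_cast; rfl⟩
  rcases hx with hx | hx <;> rcases hy with hy | hy
  · exact Or.inl (isInt_add hx hy)
  · right
    have : x + y - phi8 = x + (y - phi8) := by abel
    rw [this]; exact isInt_add hx hy
  · right
    have : x + y - phi8 = (x - phi8) + y := by abel
    rw [this]; exact isInt_add hx hy
  · left
    have : x + y = (x - phi8) + (y - phi8) + (phi8 + phi8) := by abel
    rw [this]; exact isInt_add (isInt_add hx hy) isInt_two_phi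

theorem lat_neg {x : V8} (hx : x ∈ E8lat) : -x ∈ E8lat := by
  obtain ⟨hx, n, hn⟩ := hx
  refine ⟨?_, -n, by rw [ip_neg_right, hn]; push_cast; rfl⟩
  rcases hx with hx | hx
  · exact Or.inl (isInt_neg hx)
  · right
    have : -x - phi8 = -(x - phi8) + -(phi8 + phi8) := by abel
    rw [this]; exact isInt_add (isInt_neg hx) (isInt_neg isInt_two_phi)

theorem lat_sub {x y : V8} (hx : x ∈ E8lat) (hy : y ∈ E8lat) : x - y ∈ E8lat := by
  rw [sub_eq_add_neg]; exact lat_add hx (lat_neg hy)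

def latGroup : AddSubgroup V8 where
  carrier := E8lat
  zero_mem' := lat_zero
  add_mem' := lat_add
  neg_mem' := lat_neg

theorem lat_zsmul {x : V8} (hx : x ∈ E8lat) (n : ℤ) : (n : ℂ) • x ∈ E8lat := by
  have h : n • x ∈ latGroup := latGroup.zsmul_mem hx n
  rw [Int.cast_smul_eq_zsmul]
  exact h

theorem ip_int_int {x y : V8} (hx : IsIntVec x) (hy : IsIntVec y) : ∃ n : ℤ, ip x y = n := by
  choose f hf using hx
  choose g hg using hy
  exact ⟨∑ i, f i * g i, by simp [ip, hf, hg]⟩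

theorem ip_lat {x y : V8} (hx : x ∈ E8lat) (hy : y ∈ E8lat) : ∃ n : ℤ, ip x y = n := by
  obtain ⟨hx, n, hn⟩ := hx
  obtain ⟨hy, m, hm⟩ := hy
  rcases hx with hx | hx <;> rcases hy with hy | hy
  · exact ip_int_int hx hy
  · obtain ⟨k, hk⟩ := ip_int_int hx hy
    refine ⟨k + n, ?_⟩
    rw [ip_sub_right, ip_comm x phi8, hn] at hk
    push_cast; linear_combination hk
  · obtain ⟨k, hk⟩ := ip_int_int hx hy
    refine ⟨k + m, ?_⟩
    rw [ip_sub_left, hm] at hk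
    push_cast; linear_combination hk
  · obtain ⟨k, hk⟩ := ip_int_int hx hy
    refine ⟨k + m + n - 2, ?_⟩
    rw [ip_sub_left, ip_sub_right, ip_sub_right, hm, ip_phi_phi, ip_comm x phi8, hn] at hk
    push_cast; linear_combination hk

theorem ip_int_even {x : V8} (hx : IsIntVec x) :
    ∃ n m : ℤ, ip x x = n ∧ 2 * ip phi8 x = m ∧ ∃ k, n = m + 2 * k := by
  choose f hf using hx
  refine ⟨∑ i, f i * f i, ∑ i, f i, by simp [ip, hf], ?_, ?_⟩
  · simp [ip, phi8, hf, Finset.mul_sum]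
  · have : ∀ i, ∃ k, f i * f i = f i + 2 * k := by
      intro i
      obtain ⟨c, hc⟩ := Int.even_mul_pred_self (f i)
      exact ⟨c, by linarith⟩
    choose g hg using this
    refine ⟨∑ i, g i, ?_⟩
    simp only [hg, Finset.sum_add_distrib, Finset.mul_sum]

theorem lat_even {x : V8} (hx : x ∈ E8lat) : ∃ n : ℤ, ip x x = 2 * n := by
  obtain ⟨hx, n, hn⟩ := hx
  rcases hx with hx | hx
  · obtain ⟨p, q, hp, hq, k, hk⟩ := ip_int_even hx
    refine ⟨n + k, ?_⟩
    rw [hn] at hq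
    rw [hp, hk]; push_cast; linear_combination -hq
  · obtain ⟨p, q, hp, hq, k, hk⟩ := ip_int_even hx
    rw [ip_sub_right, ip_sub_left, ip_sub_left, ip_phi_phi, ip_comm x phi8, hn] at hp
    rw [ip_sub_right, hn, ip_phi_phi] at hq
    rw [hk] at hp
    push_cast at hp
    refine ⟨2 * n - 3 + k, ?_⟩
    push_cast
    linear_combination hp - hq

/-! ### Orthonormal bases -/

theorem parseval {a : Fin 8 → V8} (h : ∀ i j, ip (a i) (a j) = if i = j then 1 else 0)
    (x : V8) : x = ∑ i, ip (a i) x • a i := by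
  have h1 : (Matrix.of a) * (Matrix.of a).transpose = 1 := by
    ext i j
    rw [Matrix.mul_apply, Matrix.one_apply, ← h i j]
    rfl
  have h2 := mul_eq_one_comm.mp h1
  have h3 : ((Matrix.of a).transpose * Matrix.of a).mulVec x = x := by
    rw [h2, Matrix.one_mulVec]
  rw [← Matrix.mulVec_mulVec] at h3
  conv_lhs => rw [← h3]
  ext k
  simp only [Matrix.mulVec, dotProduct, Matrix.transpose_apply, Matrix.of_apply, ip,
    Finset.sum_apply, Pi.smul_apply, smul_eq_mul]
  exact Finset.sum_congr rfl fun i _ => mul_comm _ _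

theorem ip_sum_right {ι : Type} (s : Finset ι) (x : V8) (f : ι → V8) :
    ip x (∑ i ∈ s, f i) = ∑ i ∈ s, ip x (f i) := by
  classical
  induction s using Finset.induction_on with
  | empty => simp [ip]
  | insert i s hi ih => rw [Finset.sum_insert hi, Finset.sum_insert hi, ip_add_right, ih]

theorem parseval_ip {a : Fin 8 → V8} (h : ∀ i j, ip (a i) (a j) = if i = j then 1 else 0)
    (x : V8) : ip x x = ∑ i, ip (a i) x ^ 2 := by
  have hx := congrArg (ip x) (parseval h x)
  rw [ip_sum_right] at hx
  rw [hx]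
  refine Finset.sum_congr rfl fun i _ => ?_
  rw [ip_smul_right, ip_comm x, sq]

/-! ### Frames -/

theorem frame_sub {A : Set V8} (hA : IsClFrame 8 A) {x y : V8} (hx : x ∈ A) (hy : y ∈ A) :
    x - y ∈ E8lat := by
  obtain ⟨a, rfl, h1, h2, h3⟩ := hA
  have key : ∀ i j, a i + a j ∈ E8lat ∧ a i - a j ∈ E8lat := by
    intro i j
    rcases lt_trichotomy i j with h | h | h
    · exact h2 i j h
    · subst h
      refine ⟨?_, by rw [sub_self]; exact lat_zero⟩
      rw [← two_smul ℂ]; exact h3 i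
    · obtain ⟨p, q⟩ := h2 j i h
      refine ⟨by rw [add_comm]; exact p, ?_⟩
      rw [← neg_sub]; exact lat_neg q
  rcases hx with ⟨i, rfl⟩ | ⟨i, rfl⟩ <;> rcases hy with ⟨j, rfl⟩ | ⟨j, rfl⟩
  · exact (key i j).2
  · simp only [sub_neg_eq_add]; exact (key i j).1
  · have := lat_neg (key i j).1
    rw [neg_add, ← sub_eq_add_neg] at this
    exact this
  · have := (key j i).2
    simp only [sub_neg_eq_add]
    rw [add_comm, ← sub_eq_add_neg]; exact this

theorem frame_norm {A : Set V8} (hA : IsClFrame 8 A) {x : V8} (hx : x ∈ A) : ip x x = 1 := by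
  obtain ⟨a, rfl, h1, h2, h3⟩ := hA
  rcases hx with ⟨i, rfl⟩ | ⟨i, rfl⟩
  · simp [h1]
  · simp [h1, ip_neg_left, ip_neg_right]

theorem frame_two {A : Set V8} (hA : IsClFrame 8 A) {x : V8} (hx : x ∈ A) :
    (2 : ℂ) • x ∈ E8lat := by
  obtain ⟨a, rfl, h1, h2, h3⟩ := hA
  rcases hx with ⟨i, rfl⟩ | ⟨i, rfl⟩
  · exact h3 i
  · simp only [smul_neg]; exact lat_neg (h3 i)

theorem sq_sum_one (n : Fin 8 → ℤ) (h : ∑ i, n i ^ 2 = 1) :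
    ∃ i, (n i = 1 ∨ n i = -1) ∧ ∀ j, j ≠ i → n j = 0 := by
  have : ∃ i, n i ≠ 0 := by
    by_contra! hc
    simp [hc] at h
  obtain ⟨i, hi⟩ := this
  rw [← Finset.add_sum_erase _ _ (Finset.mem_univ i)] at h
  have h1 : 1 ≤ n i ^ 2 := by
    have := sq_pos_of_ne_zero hi
    lia
  have h2 : ∀ j ∈ Finset.univ.erase i, 0 ≤ n j ^ 2 := fun j _ => sq_nonneg _
  have h3 := Finset.sum_nonneg h2
  have h4 : ∑ j ∈ Finset.univ.erase i, n j ^ 2 = 0 := by linarith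
  rw [Finset.sum_eq_zero_iff_of_nonneg h2] at h4
  have h5 : n i ^ 2 = 1 := by linarith
  refine ⟨i, by simpa using h5, fun j hj => ?_⟩
  exact pow_eq_zero_iff (two_ne_zero) |>.mp (h4 j (by simp [hj]))

theorem frame_subset {A B : Set V8} (hA : IsClFrame 8 A) (hB : IsClFrame 8 B) {a b : V8}
    (ha : a ∈ A) (hb : b ∈ B) (hab : a - b ∈ E8lat) : B ⊆ A := by
  intro y hy
  have key : ∀ x ∈ A, ∃ n : ℤ, ip x y = n := by
    intro x hx
    have h1 : x - y ∈ E8lat := by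
      have : x - y = (x - a) + (a - b) + (b - y) := by abel
      rw [this]
      exact lat_add (lat_add (frame_sub hA hx ha) hab) (frame_sub hB hb hy)
    obtain ⟨n, hn⟩ := lat_even h1
    rw [ip_sub_right, ip_sub_left, ip_sub_left, frame_norm hA hx, frame_norm hB hy,
      ip_comm y x] at hn
    refine ⟨1 - n, ?_⟩
    push_cast
    linear_combination (-1 / 2 : ℂ) * hn
  have hyn := frame_norm hB hy
  obtain ⟨e, rfl, h1, h2, h3⟩ := hA
  have key' : ∀ i, ∃ n : ℤ, ip (e i) y = n := fun i => key _ (Or.inl ⟨i, rfl⟩)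
  choose n hn using key'
  rw [parseval_ip h1 y] at hyn
  simp only [hn] at hyn
  have hs : ∑ i, n i ^ 2 = 1 := by exact_mod_cast hyn
  obtain ⟨i, hi, hj⟩ := sq_sum_one n hs
  have hy' := parseval h1 y
  rw [Finset.sum_eq_single i (fun j _ hji => by simp [hn, hj j hji]) (by simp), hn] at hy'
  rcases hi with hi | hi
  · left; exact ⟨i, by rw [hy', hi]; simp⟩
  · right; exact ⟨i, by rw [hy', hi]; simp⟩

theorem frame_unique_s6 {A B : Set V8} (hA : IsClFrame 8 A) (hB : IsClFrame 8 B) {a b : V8}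
    (ha : a ∈ A) (hb : b ∈ B) (hab : a - b ∈ E8lat) : A = B :=
  Set.Subset.antisymm
    (frame_subset hB hA hb ha (by rw [← neg_sub]; exact lat_neg hab))
    (frame_subset hA hB ha hb hab)

/-! ### The action of the Weyl group -/

theorem WE7_inv {w : V8 ≃ₗ[ℂ] V8} (hw : w ∈ WE7) :
    (∀ x y, ip (w x) (w y) = ip x y) ∧ (∀ x, w x ∈ E8lat ↔ x ∈ E8lat) ∧ w phi8 = phi8 := by
  induction hw using Subgroup.closure_induction with
  | mem w hw =>
    obtain ⟨α, h1, h2, h3, h4⟩ := hw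
    have hip : ∀ x y, ip (w x) (w y) = ip x y := by
      intro x y
      simp only [h4, ip_sub_left, ip_sub_right, ip_smul_left, ip_smul_right, h2, ip_comm x α]
      ring
    have hww : ∀ x, w (w x) = x := by
      intro x
      rw [h4 (w x), h4 x, ip_sub_right, ip_smul_right, h2]
      module
    have hl : ∀ x, x ∈ E8lat → w x ∈ E8lat := by
      intro x hx
      rw [h4]
      obtain ⟨n, hn⟩ := ip_lat h1 hx
      rw [hn]
      exact lat_sub hx (lat_zsmul h1 n)
    refine ⟨hip, fun x => ⟨fun h => ?_, hl x⟩, ?_⟩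
    · rw [← hww x]; exact hl _ h
    · rw [h4, ip_comm, h3]; simp
  | one => exact ⟨fun _ _ => rfl, fun _ => Iff.rfl, rfl⟩
  | mul u v _ _ hu hv =>
    refine ⟨fun x y => ?_, fun x => ?_, ?_⟩
    · exact (hu.1 _ _).trans (hv.1 _ _)
    · exact (hu.2.1 _).trans (hv.2.1 _)
    · change u (v phi8) = phi8
      rw [hv.2.2, hu.2.2]
  | inv u _ hu =>
    have huu : ∀ x, u (u⁻¹ x) = x := fun x => u.apply_symm_apply x
    refine ⟨fun x y => ?_, fun x => ?_, ?_⟩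
    · rw [← hu.1, huu, huu]
    · rw [← hu.2.1, huu]
    · exact u.injective (by rw [huu, hu.2.2])

theorem WE7_frame {w : V8 ≃ₗ[ℂ] V8} (hw : w ∈ WE7) {A : Set V8} (hA : IsClFrame 8 A) :
    IsClFrame 8 (⇑w '' A) := by
  obtain ⟨w1, w2, w3⟩ := WE7_inv hw
  obtain ⟨a, rfl, h1, h2, h3⟩ := hA
  refine ⟨fun i => w (a i), ?_, fun i j => by rw [w1, h1], fun i j hij => ?_, fun i => ?_⟩
  · rw [Set.image_union, ← Set.range_comp, ← Set.range_comp]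
    congr 2
    ext1 i
    simp
  · rw [← map_add, ← map_sub, w2, w2]; exact h2 i j hij
  · rw [← map_smul, w2]; exact h3 i

theorem WE7_phi {w : V8 ≃ₗ[ℂ] V8} (hw : w ∈ WE7) (x : V8) : ip phi8 (w x) = ip phi8 x := by
  obtain ⟨w1, w2, w3⟩ := WE7_inv hw
  conv_lhs => rw [← w3]
  exact w1 _ _

theorem WE7_typeI {w : V8 ≃ₗ[ℂ] V8} (hw : w ∈ WE7) {A : Set V8} (hA : C8TypeI A) :
    C8TypeI (⇑w '' A) := by
  rintro _ ⟨a, ha, rfl⟩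
  rw [WE7_phi hw]; exact hA a ha

theorem WE7_level {w : V8 ≃ₗ[ℂ] V8} (hw : w ∈ WE7) (A : Set V8) (c : ℂ) :
    {a ∈ ⇑w '' A | ip phi8 a = c}.ncard = {a ∈ A | ip phi8 a = c}.ncard := by
  rw [← Set.ncard_image_of_injective {a ∈ A | ip phi8 a = c} w.injective]
  congr 1
  ext x
  constructor
  · rintro ⟨⟨a, ha, rfl⟩, h⟩
    exact ⟨a, ⟨ha, by rw [← h, WE7_phi hw]⟩, rfl⟩
  · rintro ⟨a, ⟨ha, h⟩, rfl⟩
    exact ⟨⟨a, ha, rfl⟩, by rw [WE7_phi hw, h]⟩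

theorem WE7_typeII {w : V8 ≃ₗ[ℂ] V8} (hw : w ∈ WE7) {A : Set V8} (hA : C8TypeII A) :
    C8TypeII (⇑w '' A) := by
  obtain ⟨h1, h2, h3⟩ := hA
  exact ⟨by rw [WE7_level hw, h1], by rw [WE7_level hw, h2], by rw [WE7_level hw, h3]⟩

/-! ### Classification into two types -/

theorem frame_type {A : Set V8} (hA : IsClFrame 8 A) : C8TypeI A ∨ C8TypeII A := by
  have hsub : ∀ x ∈ A, ∀ y ∈ A, ∃ n : ℤ, ip phi8 x - ip phi8 y = n := by
    intro x hx y hy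
    obtain ⟨_, n, hn⟩ := frame_sub hA hx hy
    exact ⟨n, by rw [← ip_sub_right, hn]⟩
  have htwo : ∀ x ∈ A, ∃ n : ℤ, 2 * ip phi8 x = n := by
    intro x hx
    obtain ⟨_, n, hn⟩ := frame_two hA hx
    exact ⟨n, by rw [← ip_smul_right, hn]⟩
  obtain ⟨a, hAa, h1, h2, h3⟩ := hA
  have haA : ∀ i, a i ∈ A := fun i => by rw [hAa]; exact Or.inl ⟨i, rfl⟩
  have key : ∀ i, ∃ n : ℤ, 2 * ip phi8 (a i) = n := fun i => htwo _ (haA i)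
  choose n hn using key
  have hpar : ∀ i j, ∃ k : ℤ, n i - n j = 2 * k := by
    intro i j
    obtain ⟨k, hk⟩ := hsub _ (haA i) _ (haA j)
    refine ⟨k, ?_⟩
    have : ((n i - n j : ℤ) : ℂ) = ((2 * k : ℤ) : ℂ) := by
      push_cast
      rw [← hn, ← hn, ← hk]; ring
    exact_mod_cast this
  have hsum : ∑ i, n i ^ 2 = 8 := by
    have h := parseval_ip h1 phi8
    rw [ip_phi_phi] at h
    have : ((∑ i, n i ^ 2 : ℤ) : ℂ) = 8 := by
      push_cast
      have h8 : (8 : ℂ) = 4 * 2 := by norm_num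
      rw [h8, h, Finset.mul_sum]
      refine Finset.sum_congr rfl fun i _ => ?_
      rw [← hn i, ip_comm (a i)]; ring
    exact_mod_cast this
  rcases Int.even_or_odd (n 0) with he | ho
  · right
    have hm : ∀ i, ∃ m : ℤ, n i = 2 * m := by
      intro i
      obtain ⟨k, hk⟩ := hpar i 0
      obtain ⟨c, hc⟩ := he
      exact ⟨k + c, by lia⟩
    choose m hm using hm
    have hphi : ∀ i, ip phi8 (a i) = m i := by
      intro i
      have := hn i
      rw [hm i] at this
      push_cast at this
      exact mul_left_cancel₀ two_ne_zero this
    have hsm : ∑ i, m i ^ 2 = 2 := by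
      have : ∑ i, n i ^ 2 = 4 * ∑ i, m i ^ 2 := by
        rw [Finset.mul_sum]
        exact Finset.sum_congr rfl fun i _ => by rw [hm i]; ring
      lia
    have hle : ∀ i, m i = 0 ∨ m i = 1 ∨ m i = -1 := by
      intro i
      have h5 : m i ^ 2 ≤ ∑ i, m i ^ 2 :=
        Finset.single_le_sum (f := fun i => m i ^ 2) (fun j _ => sq_nonneg _) (Finset.mem_univ i)
      rw [hsm] at h5
      have h6 : m i ≤ 1 := by nlinarith
      have h7 : -1 ≤ m i := by nlinarith
      lia
    have hcard : (Finset.univ.filter fun i => m i ≠ 0).card = 2 := by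
      have : ∑ i, m i ^ 2 = ∑ i, if m i ≠ 0 then (1 : ℤ) else 0 := by
        refine Finset.sum_congr rfl fun i _ => ?_
        rcases hle i with h | h | h <;> simp [h]
      rw [this, Finset.sum_boole] at hsm
      exact_mod_cast hsm
    have hcard0 : (Finset.univ.filter fun i => m i = 0).card = 6 := by
      have := Finset.card_filter_add_card_filter_not (s := (Finset.univ : Finset (Fin 8)))
        (fun i => m i = 0)
      simp only [Finset.card_univ, Fintype.card_fin] at this
      simp only [ne_eq] at hcard
      lia
    have hinj : ∀ c : ℂ, c ≠ 0 → ∀ d : ℂ, ∀ i j, c • a i = d • a j → i = j := by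
      intro c hc d i j hij
      by_contra hne
      have := congrArg (ip (a i)) hij
      rw [ip_smul_right, ip_smul_right, h1, h1] at this
      simp [hne] at this
      exact hc this
    have hone : ∀ s : ℂ, s = 1 ∨ s = -1 → {x ∈ A | ip phi8 x = s}.ncard = 2 := by
      intro s hs
      have hset : {x ∈ A | ip phi8 x = s} =
          (fun i => (s * m i) • a i) '' ↑(Finset.univ.filter fun i => m i ≠ 0) := by
        ext x
        constructor
        · rintro ⟨hx, hxs⟩
          rw [hAa] at hx
          rcases hx with ⟨i, rfl⟩ | ⟨i, rfl⟩
          · rw [hphi] at hxs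
            refine ⟨i, ?_, ?_⟩
            · simp; rintro h; rw [h] at hxs; rcases hs with rfl | rfl <;> simp at hxs
            · simp only [hxs]; rcases hs with rfl | rfl <;> simp
          · simp only [ip_neg_right, hphi] at hxs
            refine ⟨i, ?_, ?_⟩
            · simp; rintro h; rw [h] at hxs; rcases hs with rfl | rfl <;> simp at hxs
            · have : (m i : ℂ) = -s := by rw [← hxs]; ring
              simp only [this]; rcases hs with rfl | rfl <;> simp
        · rintro ⟨i, hi, rfl⟩
          simp at hi
          have hsm' : s * m i = 1 ∨ s * m i = -1 := by
            rcases hle i with h | h | h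
            · exact absurd h hi
            · rcases hs with rfl | rfl <;> simp [h]
            · rcases hs with rfl | rfl <;> simp [h]
          refine ⟨?_, ?_⟩
          · rw [hAa]
            rcases hsm' with h | h
            · left; exact ⟨i, by simp [h]⟩
            · right; exact ⟨i, by simp [h]⟩
          · rw [ip_smul_right, hphi]
            rcases hle i with h | h | h
            · exact absurd h hi
            · simp [h]
            · simp [h]
      rw [hset, Set.InjOn.ncard_image, Set.ncard_coe_finset, hcard]
      intro i hi j hj hij
      refine hinj _ ?_ _ i j hij
      simp at hi
      rcases hs with rfl | rfl <;> simpa using hi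
    refine ⟨hone 1 (Or.inl rfl), hone (-1) (Or.inr rfl), ?_⟩
    have hset : {x ∈ A | ip phi8 x = 0} =
        (a '' ↑(Finset.univ.filter fun i => m i = 0)) ∪
        ((fun i => -a i) '' ↑(Finset.univ.filter fun i => m i = 0)) := by
      ext x
      constructor
      · rintro ⟨hx, hxs⟩
        rw [hAa] at hx
        rcases hx with ⟨i, rfl⟩ | ⟨i, rfl⟩
        · rw [hphi] at hxs
          left; exact ⟨i, by simpa using hxs, rfl⟩
        · simp only [ip_neg_right, hphi] at hxs
          right; exact ⟨i, by simpa using hxs, rfl⟩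
      · rintro (⟨i, hi, rfl⟩ | ⟨i, hi, rfl⟩)
        · simp at hi
          exact ⟨haA i, by rw [hphi, hi]; simp⟩
        · simp at hi
          exact ⟨by rw [hAa]; exact Or.inr ⟨i, rfl⟩, by simp [ip_neg_right, hphi, hi]⟩
    have i1 : Function.Injective a := fun i j hij =>
      hinj 1 one_ne_zero 1 i j (by simpa using hij)
    have i2 : Function.Injective (fun i => -a i) := fun i j hij => i1 (neg_injective hij)
    rw [hset, Set.ncard_union_eq, Set.ncard_image_of_injective _ i1,
      Set.ncard_image_of_injective _ i2, Set.ncard_coe_finset, hcard0]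
    rw [Set.disjoint_left]
    rintro x ⟨i, _, rfl⟩ ⟨j, _, hj⟩
    have hji : j = i := hinj (-1) (by norm_num) 1 j i (by simpa using hj)
    subst hji
    have := congrArg (ip (a j)) hj
    simp only [ip_neg_right, h1] at this
    norm_num at this
  · left
    have hge : ∀ i, 1 ≤ n i ^ 2 := by
      intro i
      have : n i ≠ 0 := by
        obtain ⟨k, hk⟩ := hpar i 0
        obtain ⟨c, hc⟩ := ho
        lia
      have := sq_pos_of_ne_zero this
      lia
    have heq : ∀ i, n i ^ 2 = 1 := by
      have h5 : ∑ i, (n i ^ 2 - 1) = 0 := by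
        rw [Finset.sum_sub_distrib, hsum]; simp
      rw [Finset.sum_eq_zero_iff_of_nonneg (fun i _ => by linarith [hge i])] at h5
      intro i
      linarith [h5 i (Finset.mem_univ i)]
    have hval : ∀ i, ip phi8 (a i) = 1 / 2 ∨ ip phi8 (a i) = -(1 / 2) := by
      intro i
      have h6 := hn i
      have h7 : n i = 1 ∨ n i = -1 := by simpa using heq i
      rcases h7 with h | h
      · left; rw [h] at h6; push_cast at h6; linear_combination h6 / 2
      · right; rw [h] at h6; push_cast at h6; linear_combination h6 / 2
    intro x hx
    rw [hAa] at hx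
    rcases hx with ⟨i, rfl⟩ | ⟨i, rfl⟩
    · exact hval i
    · simp only [ip_neg_right]
      rcases hval i with h | h
      · right; rw [h]
      · left; rw [h]; ring

/-! ### Integer combinatorics on lists -/

/-- evaluate an integer before passing it on (identity, speeds up kernel reduction) -/
def lforce {α : Type} (x : ℤ) (f : ℤ → α) : α :=
  match x with
  | .ofNat 0 => f (.ofNat 0)
  | .ofNat (k + 1) => f (.ofNat (k + 1))
  | .negSucc 0 => f (.negSucc 0)
  | .negSucc (k + 1) => f (.negSucc (k + 1))

theorem lforce_eq {α : Type} (x : ℤ) (f : ℤ → α) : lforce x f = f x := by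
  unfold lforce
  split <;> rfl

def ldot : List ℤ → List ℤ → ℤ
  | x :: xs, y :: ys => x * y + ldot xs ys
  | _, _ => 0

def lsub (k : ℤ) : List ℤ → List ℤ → List ℤ
  | x :: xs, y :: ys => lforce (x - k * y) fun z => z :: lsub k xs ys
  | _, _ => []

def lsum : List ℤ → ℤ
  | [] => 0
  | x :: xs => x + lsum xs

/-- lists of length `n` with entries in `C`, sum of squares `q` and sum `s`
(pruned with Cauchy-Schwarz) -/
def lenum (C : List ℤ) : ℕ → ℤ → ℤ → List (List ℤ)
  | 0, q, s => if q = 0 ∧ s = 0 then [[]] else []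
  | n + 1, q, s => C.flatMap fun x => lforce (q - x * x) fun q' => lforce (s - x) fun s' =>
      if s' * s' ≤ (n : ℤ) * q' then
        (lenum C n q' s').map (fun l => x :: l) else []

def candidates (s : ℤ) : List (List ℤ) :=
  lenum [-3, -1, 1, 3] 8 16 s ++ lenum [-4, -2, 0, 2, 4] 8 16 s

def simpleRoots : List (List ℤ) :=
  [[2, -2, 0, 0, 0, 0, 0, 0], [0, 2, -2, 0, 0, 0, 0, 0], [0, 0, 2, -2, 0, 0, 0, 0],
   [0, 0, 0, 2, -2, 0, 0, 0], [0, 0, 0, 0, 2, -2, 0, 0], [0, 0, 0, 0, 0, 2, -2, 0],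
   [-1, -1, -1, -1, 1, 1, 1, 1]]

/-- one conditional reflection -/
def lstep (r v : List ℤ) : List ℤ :=
  lforce (ldot r v) fun d => lforce (d / 4) fun k =>
    if k < 0 then (if 4 * k = d then lsub k v r else v) else v

def lround (v : List ℤ) : List ℤ := simpleRoots.foldl (fun v r => lstep r v) v

def ldescend : ℕ → List ℤ → List ℤ
  | 0, v => v
  | n + 1, v => ldescend n (lround v)

/-- the difference lies in `4P` up to the condition on the sum -/
def lcong (c : ℤ) : List ℤ → List ℤ → Bool
  | x :: xs, y :: ys => (x - y) % 4 == c && lcong c xs ys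
  | _, _ => true

def lcong' (x y : List ℤ) : Bool := lcong 0 x y || lcong 2 x y

def repI (l : List ℤ) : Bool :=
  match l with
  | x :: _ => x == 4 || x == 3 || x == -2 || x == -3
  | [] => false

def lpos : List ℤ → Bool
  | [] => false
  | x :: xs => 1 < x || (x == 1 && lpos xs)

def RI : List (List ℤ) := (candidates 4).filter repI
def RII : List (List ℤ) := (candidates 8).filter lpos

def baseI : List ℤ := [0, 0, 0, 0, 0, 0, 0, 4]

def baseII : List ℤ := [1, 1, 1, 1, 1, 1, -1, 3]

def lpw : List (List ℤ) → Bool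
  | [] => true
  | x :: xs => xs.all (fun y => !(lcong' x y)) && lpw xs

def frameI : List (List ℤ) :=
  [[4, 0, 0, 0, 0, 0, 0, 0], [0, 4, 0, 0, 0, 0, 0, 0], [0, 0, 4, 0, 0, 0, 0, 0],
   [0, 0, 0, 4, 0, 0, 0, 0], [0, 0, 0, 0, 4, 0, 0, 0], [0, 0, 0, 0, 0, 4, 0, 0],
   [0, 0, 0, 0, 0, 0, 4, 0], [0, 0, 0, 0, 0, 0, 0, 4]]

def frameII : List (List ℤ) :=
  [[1, 1, 1, 1, 1, 1, -1, 3], [1, 1, 1, 1, 1, 1, 3, -1], [-3, 1, 1, 1, 1, 1, -1, -1],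
   [1, -3, 1, 1, 1, 1, -1, -1], [1, 1, -3, 1, 1, 1, -1, -1], [1, 1, 1, -3, 1, 1, -1, -1],
   [1, 1, 1, 1, -3, 1, -1, -1], [1, 1, 1, 1, 1, -3, -1, -1]]

/-- decidable frame conditions -/
def frameCheck (F : List (List ℤ)) : Prop :=
  F.length = 8 ∧ (∀ i : Fin 8, (F.getD i []).length = 8) ∧
  (∀ i j : Fin 8, ldot (F.getD i []) (F.getD j []) = if i = j then 16 else 0) ∧
  (∀ i j : Fin 8, lcong' (F.getD i []) (F.getD j []) = true ∧
    (lsum (F.getD i []) - lsum (F.getD j [])) % 8 = 0) ∧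
  (∀ i j : Fin 8, lcong' (F.getD i []) (lsub 2 (F.getD j []) (F.getD j [])) = true ∧
    (lsum (F.getD i []) - lsum (lsub 2 (F.getD j []) (F.getD j []))) % 8 = 0)


/-! ### From lists to vectors -/

def toV (l : List ℤ) : V8 := fun i => ((l.getD i 0 : ℤ) : ℂ) / 4

theorem eight_cases (l : List ℤ) (hl : l.length = 8) :
    ∃ a b c d e f g h : ℤ, l = [a, b, c, d, e, f, g, h] := by
  match l, hl with
  | [a, b, c, d, e, f, g, h], _ => exact ⟨a, b, c, d, e, f, g, h, rfl⟩

theorem ip_toV (l m : List ℤ) (hl : l.length = 8) (hm : m.length = 8) :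
    ip (toV l) (toV m) = (ldot l m : ℂ) / 16 := by
  obtain ⟨a, b, c, d, e, f, g, h, rfl⟩ := eight_cases l hl
  obtain ⟨aa, bb, cc, dd, ee, ff, gg, hh, rfl⟩ := eight_cases m hm
  simp [ip, toV, Fin.sum_univ_eight, ldot]
  ring

theorem phi_toV (l : List ℤ) (hl : l.length = 8) :
    ip phi8 (toV l) = (lsum l : ℂ) / 8 := by
  obtain ⟨a, b, c, d, e, f, g, h, rfl⟩ := eight_cases l hl
  simp [ip, toV, phi8, Fin.sum_univ_eight, lsum]
  ring

theorem length_lsub (k : ℤ) (l m : List ℤ) (h : l.length = m.length) :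
    (lsub k l m).length = l.length := by
  induction l generalizing m with
  | nil => simp [lsub]
  | cons x xs ih =>
    cases m with
    | nil => simp at h
    | cons y ys => simp [lsub, lforce_eq, ih ys (by simpa using h)]

theorem toV_lsub (k : ℤ) (l m : List ℤ) (hl : l.length = 8) (hm : m.length = 8) :
    toV (lsub k l m) = toV l - (k : ℂ) • toV m := by
  obtain ⟨a, b, c, d, e, f, g, h, rfl⟩ := eight_cases l hl
  obtain ⟨aa, bb, cc, dd, ee, ff, gg, hh, rfl⟩ := eight_cases m hm
  ext i
  fin_cases i <;> simp [toV, lsub, lforce_eq] <;> ring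

theorem int_quarter (x y : ℤ) : (∃ n : ℤ, (x : ℂ) / 4 - (y : ℂ) / 4 = n) ↔ (x - y) % 4 = 0 := by
  constructor
  · rintro ⟨n, hn⟩
    have : ((x - y : ℤ) : ℂ) = ((4 * n : ℤ) : ℂ) := by push_cast; rw [← hn]; ring
    have : x - y = 4 * n := by exact_mod_cast this
    lia
  · intro h
    obtain ⟨n, hn⟩ : ∃ n, x - y = 4 * n := ⟨(x - y) / 4, by lia⟩
    refine ⟨n, ?_⟩
    have : ((x - y : ℤ) : ℂ) = ((4 * n : ℤ) : ℂ) := by rw [hn]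
    push_cast at this
    linear_combination this / 4

theorem int_quarter_half (x y : ℤ) :
    (∃ n : ℤ, (x : ℂ) / 4 - (y : ℂ) / 4 - 2⁻¹ = n) ↔ (x - y) % 4 = 2 := by
  constructor
  · rintro ⟨n, hn⟩
    have : ((x - y : ℤ) : ℂ) = ((4 * n + 2 : ℤ) : ℂ) := by push_cast; rw [← hn]; ring
    have : x - y = 4 * n + 2 := by exact_mod_cast this
    lia
  · intro h
    obtain ⟨n, hn⟩ : ∃ n, x - y = 4 * n + 2 := ⟨(x - y) / 4, by lia⟩
    refine ⟨n, ?_⟩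
    have : ((x - y : ℤ) : ℂ) = ((4 * n + 2 : ℤ) : ℂ) := by rw [hn]
    push_cast at this
    linear_combination this / 4

theorem int_eighth (x y : ℤ) : (∃ n : ℤ, (x : ℂ) / 8 - (y : ℂ) / 8 = n) ↔ (x - y) % 8 = 0 := by
  constructor
  · rintro ⟨n, hn⟩
    have : ((x - y : ℤ) : ℂ) = ((8 * n : ℤ) : ℂ) := by push_cast; rw [← hn]; ring
    have : x - y = 8 * n := by exact_mod_cast this
    lia
  · intro h
    obtain ⟨n, hn⟩ : ∃ n, x - y = 8 * n := ⟨(x - y) / 8, by lia⟩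
    refine ⟨n, ?_⟩
    have : ((x - y : ℤ) : ℂ) = ((8 * n : ℤ) : ℂ) := by rw [hn]
    push_cast at this
    linear_combination this / 8

theorem forall_fin_eight {P : Fin 8 → Prop} :
    (∀ i, P i) ↔ P 0 ∧ P 1 ∧ P 2 ∧ P 3 ∧ P 4 ∧ P 5 ∧ P 6 ∧ P 7 := by
  constructor
  · intro h; exact ⟨h 0, h 1, h 2, h 3, h 4, h 5, h 6, h 7⟩
  · rintro ⟨h0, h1, h2, h3, h4, h5, h6, h7⟩ i
    fin_cases i <;> assumption

theorem isInt_toV_sub (l m : List ℤ) (hl : l.length = 8) (hm : m.length = 8) :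
    IsIntVec (toV l - toV m) ↔ lcong 0 l m = true := by
  obtain ⟨a, b, c, d, e, f, g, h, rfl⟩ := eight_cases l hl
  obtain ⟨aa, bb, cc, dd, ee, ff, gg, hh, rfl⟩ := eight_cases m hm
  rw [IsIntVec, forall_fin_eight]
  simp [toV, lcong, int_quarter]

theorem isInt_toV_sub_half (l m : List ℤ) (hl : l.length = 8) (hm : m.length = 8) :
    IsIntVec (toV l - toV m - phi8) ↔ lcong 2 l m = true := by
  obtain ⟨a, b, c, d, e, f, g, h, rfl⟩ := eight_cases l hl
  obtain ⟨aa, bb, cc, dd, ee, ff, gg, hh, rfl⟩ := eight_cases m hm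
  rw [IsIntVec, forall_fin_eight]
  simp [toV, lcong, int_quarter_half, phi8]

theorem toV_sub_mem (l m : List ℤ) (hl : l.length = 8) (hm : m.length = 8) :
    toV l - toV m ∈ E8lat ↔ lcong' l m = true ∧ (lsum l - lsum m) % 8 = 0 := by
  rw [E8lat, Set.mem_ofPred_eq, isInt_toV_sub l m hl hm, isInt_toV_sub_half l m hl hm,
    ip_sub_right, phi_toV l hl, phi_toV m hm, int_eighth, lcong', Bool.or_eq_true]

/-! ### Correctness of the enumeration -/

theorem lenum_sound (C : List ℤ) (n : ℕ) (q s : ℤ) (l : List ℤ) (h : l ∈ lenum C n q s) :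
    l.length = n ∧ lsum l = s := by
  induction n generalizing q s l with
  | zero =>
    rw [lenum] at h
    split_ifs at h with h1
    · simp at h; subst h; simp [lsum, h1.2]
    · simp at h
  | succ n ih =>
    rw [lenum, List.mem_flatMap] at h
    obtain ⟨x, hx, h⟩ := h
    rw [lforce_eq, lforce_eq] at h
    split_ifs at h with h1
    · rw [List.mem_map] at h
      obtain ⟨t, ht, rfl⟩ := h
      obtain ⟨h2, h3⟩ := ih _ _ _ ht
      exact ⟨by simp [h2], by rw [lsum, h3]; ring⟩
    · simp at h

theorem ldot_self_nonneg (l : List ℤ) : 0 ≤ ldot l l := by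
  induction l with
  | nil => simp [ldot]
  | cons x xs ih => rw [ldot]; nlinarith [mul_self_nonneg x]

theorem mul_self_le_ldot (l : List ℤ) (x : ℤ) (hx : x ∈ l) : x * x ≤ ldot l l := by
  induction l with
  | nil => simp at hx
  | cons y ys ih =>
    rw [ldot]
    rcases List.mem_cons.mp hx with rfl | h
    · linarith [ldot_self_nonneg ys]
    · linarith [ih h, mul_self_nonneg y]

theorem lsum_cauchy (l : List ℤ) : lsum l * lsum l ≤ (l.length : ℤ) * ldot l l := by
  induction l with
  | nil => simp [lsum]
  | cons x xs ih =>
    have h0 := ldot_self_nonneg xs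
    rw [lsum, ldot, List.length_cons]
    push_cast
    generalize lsum xs = S at *
    generalize ldot xs xs = Q at *
    rcases Nat.eq_zero_or_pos xs.length with h | h
    · rw [h] at ih ⊢
      push_cast at *
      have : S = 0 := by nlinarith
      subst this
      nlinarith
    · generalize xs.length = n at *
      have hn : (0 : ℤ) < n := by exact_mod_cast h
      by_contra! hc
      have h1 := mul_lt_mul_of_pos_left hc hn
      nlinarith [mul_self_nonneg ((n : ℤ) * x - S)]

theorem lenum_complete (C : List ℤ) (l : List ℤ) (hC : ∀ x ∈ l, x ∈ C) :
    l ∈ lenum C l.length (ldot l l) (lsum l) := by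
  induction l with
  | nil => simp [lenum, ldot, lsum]
  | cons x xs ih =>
    rw [List.length_cons, lenum, List.mem_flatMap]
    refine ⟨x, hC x (by simp), ?_⟩
    have h1 : ldot (x :: xs) (x :: xs) - x * x = ldot xs xs := by rw [ldot]; ring
    have h2 : lsum (x :: xs) - x = lsum xs := by rw [lsum]; ring
    rw [lforce_eq, lforce_eq, h1, h2, if_pos (lsum_cauchy xs), List.mem_map]
    exact ⟨xs, ih fun y hy => hC y (by simp [hy]), rfl⟩

theorem candidates_sound {s : ℤ} {l : List ℤ} (h : l ∈ candidates s) :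
    l.length = 8 ∧ lsum l = s := by
  rw [candidates, List.mem_append] at h
  rcases h with h | h <;> exact lenum_sound _ _ _ _ _ h

theorem candidates_complete {s : ℤ} {a : V8} (h2 : (2 : ℂ) • a ∈ E8lat) (h1 : ip a a = 1)
    (hs : ip phi8 a = (s : ℂ) / 8) : ∃ l ∈ candidates s, toV l = a := by
  suffices h : ∃ l : List ℤ, l.length = 8 ∧ toV l = a ∧
      ((∀ x ∈ l, x % 2 = 1) ∨ (∀ x ∈ l, x % 2 = 0)) by
    obtain ⟨l, hl, rfl, hp⟩ := h
    refine ⟨l, ?_, rfl⟩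
    rw [ip_toV l l hl hl] at h1
    rw [phi_toV l hl] at hs
    have hd : ldot l l = 16 := by
      have : (ldot l l : ℂ) = (16 : ℤ) := by push_cast; linear_combination 16 * h1
      exact_mod_cast this
    have hs' : lsum l = s := by
      have : (lsum l : ℂ) = (s : ℤ) := by linear_combination 8 * hs
      exact_mod_cast this
    have hb : ∀ x ∈ l, -4 ≤ x ∧ x ≤ 4 := by
      intro x hx
      have := mul_self_le_ldot l x hx
      constructor <;> nlinarith
    rw [candidates, List.mem_append]
    rcases hp with hp | hp
    · left
      have := lenum_complete [-3, -1, 1, 3] l (by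
        intro x hx
        have := hb x hx
        have := hp x hx
        simp
        lia)
      rwa [hl, hd, hs'] at this
    · right
      have := lenum_complete [-4, -2, 0, 2, 4] l (by
        intro x hx
        have := hb x hx
        have := hp x hx
        simp
        lia)
      rwa [hl, hd, hs'] at this
  obtain ⟨h, -⟩ := h2
  rcases h with h | h
  · choose n hn using h
    refine ⟨List.ofFn fun i => 2 * n i, by simp, ?_, Or.inr ?_⟩
    · ext i
      have := hn i
      simp only [Pi.smul_apply, smul_eq_mul] at this
      simp only [toV, List.getD_eq_getElem?_getD, List.getElem?_ofFn, Fin.is_lt, dite_true,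
        Option.getD_some, Fin.eta]
      push_cast
      linear_combination -this / 2
    · intro x hx
      rw [List.mem_ofFn] at hx
      obtain ⟨i, rfl⟩ := hx
      lia
  · choose n hn using h
    refine ⟨List.ofFn fun i => 2 * n i + 1, by simp, ?_, Or.inl ?_⟩
    · ext i
      have := hn i
      simp only [Pi.smul_apply, Pi.sub_apply, phi8, smul_eq_mul] at this
      simp only [toV, List.getD_eq_getElem?_getD, List.getElem?_ofFn, Fin.is_lt, dite_true,
        Option.getD_some, Fin.eta]
      push_cast
      linear_combination -this / 2
    · intro x hx
      rw [List.mem_ofFn] at hx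
      obtain ⟨i, rfl⟩ := hx
      lia

/-! ### Reflections -/

def ipL (α : V8) : Module.Dual ℂ V8 where
  toFun v := ip α v
  map_add' := ip_add_right α
  map_smul' c v := by simp [ip_smul_right]

theorem exists_reflection {α : V8} (h1 : α ∈ E8lat) (h2 : ip α α = 2) (h3 : ip phi8 α = 0) :
    ∃ w ∈ WE7, ∀ v, w v = v - ip α v • α := by
  have h : ipL α α = 2 := h2
  have hw : ∀ v, Module.reflection h v = v - ip α v • α := fun v => Module.reflection_apply v h
  exact ⟨Module.reflection h, Subgroup.subset_closure ⟨α, h1, h2, h3, hw⟩, hw⟩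

def zero8 : List ℤ := [0, 0, 0, 0, 0, 0, 0, 0]

theorem toV_zero8 : toV zero8 = 0 := by
  ext i
  fin_cases i <;> simp [toV, zero8]

theorem root_check : ∀ r ∈ simpleRoots, r.length = 8 ∧ ldot r r = 8 ∧ lsum r = 0 ∧
    lcong' (lsub (-1) r r) zero8 = true ∧
    (lsum (lsub (-1) r r) - lsum zero8) % 8 = 0 := by
  decide +kernel

theorem root_reflection {r : List ℤ} (hr : r ∈ simpleRoots) :
    ∃ w ∈ WE7, ∀ v, w v = v - ip ((2 : ℂ) • toV r) v • ((2 : ℂ) • toV r) := by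
  obtain ⟨h1, h2, h3, h4, h5⟩ := root_check r hr
  apply exists_reflection
  · have h6 := (toV_sub_mem (lsub (-1) r r) zero8 (by rw [length_lsub _ _ _ rfl, h1]) rfl).mpr
      ⟨h4, h5⟩
    rw [toV_zero8, sub_zero, toV_lsub _ _ _ h1 h1] at h6
    have : (2 : ℂ) • toV r = toV r - ((-1 : ℤ) : ℂ) • toV r := by push_cast; module
    rw [this]; exact h6
  · rw [ip_smul_left, ip_smul_right, ip_toV r r h1 h1, h2]; norm_num
  · rw [ip_smul_right, phi_toV r h1, h3]; simp

theorem lstep_spec {r : List ℤ} (hr : r ∈ simpleRoots) {l : List ℤ} (hl : l.length = 8) :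
    (lstep r l).length = 8 ∧ ∃ w ∈ WE7, w (toV l) = toV (lstep r l) := by
  have hr8 := (root_check r hr).1
  rw [lstep, lforce_eq, lforce_eq]
  split_ifs with h0 h
  · refine ⟨by rw [length_lsub _ _ _ (by rw [hl, hr8]), hl], ?_⟩
    obtain ⟨w, hw, hwv⟩ := root_reflection hr
    refine ⟨w, hw, ?_⟩
    rw [hwv, toV_lsub _ _ _ hl hr8, ip_smul_left, ip_toV r l hr8 hl]
    have h4 : (ldot r l : ℂ) = 4 * ((ldot r l / 4 : ℤ) : ℂ) := by exact_mod_cast h.symm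
    rw [h4]
    module
  · exact ⟨hl, 1, one_mem _, rfl⟩
  · exact ⟨hl, 1, one_mem _, rfl⟩

theorem foldl_spec (L : List (List ℤ)) (hL : ∀ r ∈ L, r ∈ simpleRoots) (l : List ℤ)
    (hl : l.length = 8) :
    (L.foldl (fun v r => lstep r v) l).length = 8 ∧
      ∃ w ∈ WE7, w (toV l) = toV (L.foldl (fun v r => lstep r v) l) := by
  induction L generalizing l with
  | nil => exact ⟨hl, 1, one_mem _, rfl⟩
  | cons r L ih =>
    obtain ⟨h1, w, hw, hwl⟩ := lstep_spec (hL r (by simp)) hl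
    obtain ⟨h2, u, hu, hul⟩ := ih (fun x hx => hL x (by simp [hx])) (lstep r l) h1
    refine ⟨h2, u * w, mul_mem hu hw, ?_⟩
    rw [List.foldl_cons, ← hul, ← hwl]
    rfl

theorem ldescend_spec (n : ℕ) (l : List ℤ) (hl : l.length = 8) :
    ∃ w ∈ WE7, w (toV l) = toV (ldescend n l) := by
  induction n generalizing l with
  | zero => exact ⟨1, one_mem _, rfl⟩
  | succ n ih =>
    obtain ⟨h1, w, hw, hwl⟩ := foldl_spec simpleRoots (fun _ h => h) l hl
    obtain ⟨u, hu, hul⟩ := ih (lround l) h1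
    refine ⟨u * w, mul_mem hu hw, ?_⟩
    rw [ldescend, ← hul]
    exact congrArg u hwl

/-! ### Counting and transitivity -/

theorem lpw_pairwise {R : List (List ℤ)} (h : lpw R = true) :
    R.Pairwise fun l m => lcong' l m = false := by
  induction R with
  | nil => exact List.Pairwise.nil
  | cons x xs ih =>
    rw [lpw, Bool.and_eq_true, List.all_eq_true] at h
    exact List.Pairwise.cons (fun y hy => by simpa using h.1 y hy) (ih h.2)

theorem count_and_orbit (s : ℤ) (R : List (List ℤ)) (base : List ℤ) (fuel : ℕ)
    (T : Set V8 → Prop) (B0 : Set V8)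
    (hR : ∀ l ∈ R, l ∈ candidates s)
    (hrep : ((candidates s).all fun l => R.any fun m => lcong' l m) = true)
    (hpw : lpw R = true)
    (hdes : (R.all fun l => ldescend fuel l == base) = true)
    (hT : ∀ w ∈ WE7, ∀ A, T A → T (⇑w '' A))
    (hex : ∀ A, IsClFrame 8 A → T A → ∃ a ∈ A, ip phi8 a = (s : ℂ) / 8)
    (hB : IsClFrame 8 B0) (hTB : T B0) (hbase : toV base ∈ B0) :
    {A | IsClFrame 8 A ∧ T A}.ncard = R.length ∧
    ∀ A B : Set V8, IsClFrame 8 A ∧ T A → IsClFrame 8 B ∧ T B → ∃ w ∈ WE7, ⇑w '' A = B := by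
  classical
  have hlen : ∀ l ∈ R, l.length = 8 := fun l hl => (candidates_sound (hR l hl)).1
  have hsum : ∀ l ∈ R, lsum l = s := fun l hl => (candidates_sound (hR l hl)).2
  have K1 : ∀ l ∈ R, ∃ w ∈ WE7, w (toV l) = toV base := by
    intro l hl
    obtain ⟨w, hw, h⟩ := ldescend_spec fuel l (hlen l hl)
    rw [List.all_eq_true] at hdes
    have := hdes l hl
    rw [beq_iff_eq] at this
    exact ⟨w, hw, by rw [h, this]⟩
  have K2 : ∀ l ∈ R, ∃ A, (IsClFrame 8 A ∧ T A) ∧ toV l ∈ A := by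
    intro l hl
    obtain ⟨w, hw, h⟩ := K1 l hl
    have hw' : w⁻¹ ∈ WE7 := inv_mem hw
    refine ⟨⇑w⁻¹ '' B0, ⟨WE7_frame hw' hB, hT _ hw' _ hTB⟩, toV base, hbase, ?_⟩
    rw [← h]
    exact w.symm_apply_apply _
  have K3 : ∀ A, IsClFrame 8 A → T A → ∃ l ∈ R, toV l ∈ A := by
    intro A hA hTA
    obtain ⟨a, ha, has⟩ := hex A hA hTA
    obtain ⟨l, hl, rfl⟩ := candidates_complete (frame_two hA ha) (frame_norm hA ha) has
    rw [List.all_eq_true] at hrep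
    have := hrep l hl
    rw [List.any_eq_true] at this
    obtain ⟨m, hm, hlm⟩ := this
    obtain ⟨B, ⟨hB1, hB2⟩, hmB⟩ := K2 m hm
    have hls := candidates_sound hl
    have : A = B := frame_unique_s6 hA hB1 ha hmB
      ((toV_sub_mem l m hls.1 (hlen m hm)).mpr ⟨hlm, by rw [hls.2, hsum m hm]; simp⟩)
    exact ⟨m, hm, this ▸ hmB⟩
  have K4 : ∀ A, IsClFrame 8 A → T A → ∃ w ∈ WE7, ⇑w '' A = B0 := by
    intro A hA hTA
    obtain ⟨l, hl, hlA⟩ := K3 A hA hTA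
    obtain ⟨w, hw, h⟩ := K1 l hl
    refine ⟨w, hw, frame_unique_s6 (WE7_frame hw hA) hB ⟨_, hlA, rfl⟩ hbase ?_⟩
    rw [h, sub_self]; exact lat_zero
  have hpw' : R.Pairwise fun l m => toV l - toV m ∉ E8lat := by
    refine List.Pairwise.imp_of_mem ?_ (lpw_pairwise hpw)
    intro l m hl hm h hmem
    rw [toV_sub_mem l m (hlen l hl) (hlen m hm), h] at hmem
    simp at hmem
  have hnodup : R.Nodup := by
    refine hpw'.imp ?_
    rintro l m h rfl
    rw [sub_self] at h
    exact h lat_zero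
  have hinj : ∀ l ∈ R, ∀ m ∈ R, toV l - toV m ∈ E8lat → l = m := by
    intro l hl m hm h
    by_contra hne
    have hsymm : ∀ ⦃x y⦄, toV x - toV y ∉ E8lat → toV y - toV x ∉ E8lat := by
      intro x y hxy hyx
      apply hxy
      rw [← neg_sub]; exact lat_neg hyx
    exact (haveI : Std.Symm fun x y => toV x - toV y ∉ E8lat := ⟨hsymm⟩
      List.Pairwise.forall hpw' hl hm hne) h
  constructor
  · have K2' : ∀ l, ∃ A, l ∈ R → (IsClFrame 8 A ∧ T A) ∧ toV l ∈ A := by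
      intro l
      by_cases hl : l ∈ R
      · obtain ⟨A, hA⟩ := K2 l hl
        exact ⟨A, fun _ => hA⟩
      · exact ⟨∅, fun h => absurd h hl⟩
    choose g hg using K2'
    have hset : {A | IsClFrame 8 A ∧ T A} = g '' ↑R.toFinset := by
      ext A
      constructor
      · rintro ⟨hA, hTA⟩
        obtain ⟨l, hl, hlA⟩ := K3 A hA hTA
        refine ⟨l, by simpa using hl, ?_⟩
        obtain ⟨⟨h1, h2⟩, h3⟩ := hg l hl
        exact frame_unique_s6 h1 hA h3 hlA (by rw [sub_self]; exact lat_zero)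
      · rintro ⟨l, hl, rfl⟩
        exact (hg l (by simpa using hl)).1
    rw [hset, Set.InjOn.ncard_image, Set.ncard_coe_finset, List.toFinset_card_of_nodup hnodup]
    intro l hl m hm hlm
    have hl' : l ∈ R := by simpa using hl
    have hm' : m ∈ R := by simpa using hm
    apply hinj l hl' m hm'
    have h1 := hg l hl'
    have h2 := hg m hm'
    rw [← hlm] at h2
    exact frame_sub h1.1.1 h1.2 h2.2
  · rintro A B ⟨hA, hTA⟩ ⟨hB', hTB'⟩
    obtain ⟨w, hw, hwA⟩ := K4 A hA hTA
    obtain ⟨u, hu, huB⟩ := K4 B hB' hTB'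
    refine ⟨u⁻¹ * w, mul_mem (inv_mem hu) hw, ?_⟩
    have : ⇑(u⁻¹ * w) '' A = ⇑u⁻¹ '' (⇑w '' A) := by
      rw [← Set.image_comp]; rfl
    rw [this, hwA, ← huB, ← Set.image_comp]
    have hid : ⇑u⁻¹ ∘ ⇑u = id := by
      ext1 x; exact u.symm_apply_apply x
    rw [hid, Set.image_id]

/-! ### The base frames -/

def listFrame (F : List (List ℤ)) : Set V8 :=
  Set.range (fun i : Fin 8 => toV (F.getD i [])) ∪
    Set.range (fun i : Fin 8 => -toV (F.getD i []))

theorem listFrame_isFrame {F : List (List ℤ)} (h : frameCheck F) :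
    IsClFrame 8 (listFrame F) := by
  obtain ⟨-, h1, h2, h3, h4⟩ := h
  have hadd : ∀ i j : Fin 8, toV (F.getD i []) + toV (F.getD j []) ∈ E8lat := by
    intro i j
    have := (toV_sub_mem _ _ (h1 i) (by rw [length_lsub _ _ _ rfl, h1 j])).mpr (h4 i j)
    rw [toV_lsub _ _ _ (h1 j) (h1 j)] at this
    have h5 : toV (F.getD i []) + toV (F.getD j []) = toV (F.getD i []) -
      (toV (F.getD j []) - ((2 : ℤ) : ℂ) • toV (F.getD j [])) := by push_cast; module
    rw [h5]; exact this
  refine ⟨fun i => toV (F.getD i []), rfl, fun i j => ?_, fun i j _ => ⟨hadd i j, ?_⟩, fun i => ?_⟩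
  · rw [ip_toV _ _ (h1 i) (h1 j), h2]
    split_ifs <;> simp
  · exact (toV_sub_mem _ _ (h1 i) (h1 j)).mpr (h3 i j)
  · rw [two_smul]; exact hadd i i

theorem frameI_check : frameCheck frameI := by unfold frameCheck; decide +kernel
theorem frameII_check : frameCheck frameII := by unfold frameCheck; decide +kernel

theorem baseI_mem : toV baseI ∈ listFrame frameI := Or.inl ⟨7, rfl⟩
theorem baseII_mem : toV baseII ∈ listFrame frameII := Or.inl ⟨0, rfl⟩

theorem typeI_frameI : C8TypeI (listFrame frameI) := by
  have h : ∀ i : Fin 8, lsum (frameI.getD i []) = 4 := by decide +kernel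
  have h8 := frameI_check.2.1
  rintro x (⟨i, rfl⟩ | ⟨i, rfl⟩)
  · left
    simp only []
    rw [phi_toV _ (h8 i), h i]; norm_num
  · right
    simp only [ip_neg_right]
    rw [phi_toV _ (h8 i), h i]; norm_num

theorem typeII_frameII : C8TypeII (listFrame frameII) := by
  rcases frame_type (listFrame_isFrame frameII_check) with h | h
  · exfalso
    have h1 := h _ baseII_mem
    rw [phi_toV _ rfl] at h1
    have h2 : lsum baseII = 8 := by decide +kernel
    rw [h2] at h1
    norm_num at h1
  · exact h

theorem typeI_exists (A : Set V8) (hA : IsClFrame 8 A) (h : C8TypeI A) :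
    ∃ a ∈ A, ip phi8 a = ((4 : ℤ) : ℂ) / 8 := by
  obtain ⟨a, rfl, -⟩ := hA
  rcases h (a 0) (Or.inl ⟨0, rfl⟩) with h1 | h1
  · exact ⟨a 0, Or.inl ⟨0, rfl⟩, by rw [h1]; norm_num⟩
  · exact ⟨-a 0, Or.inr ⟨0, rfl⟩, by rw [ip_neg_right, h1]; norm_num⟩

theorem typeII_exists (A : Set V8) (_ : IsClFrame 8 A) (h : C8TypeII A) :
    ∃ a ∈ A, ip phi8 a = ((8 : ℤ) : ℂ) / 8 := by
  have h1 : {a ∈ A | ip phi8 a = 1}.Nonempty := by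
    apply Set.nonempty_of_ncard_ne_zero
    rw [h.1]; norm_num
  obtain ⟨a, ha, ha1⟩ := h1
  exact ⟨a, ha, by rw [ha1]; norm_num⟩

/-! ### Kernel computations -/

theorem RI_length : RI.length = 72 := by decide +kernel
theorem RII_length : RII.length = 63 := by decide +kernel
theorem RI_rep : ((candidates 4).all fun l => RI.any fun m => lcong' l m) = true := by
  decide +kernel
theorem RII_rep : ((candidates 8).all fun l => RII.any fun m => lcong' l m) = true := by
  decide +kernel
theorem RI_pw : lpw RI = true := by decide +kernel
theorem RII_pw : lpw RII = true := by decide +kernel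
theorem RI_descend : (RI.all fun l => ldescend 6 l == baseI) = true := by decide +kernel
theorem RII_descend : (RII.all fun l => ldescend 10 l == baseII) = true := by decide +kernel

/-- Proposition 3.1: every `C₈`-frame is of type I or of type II; there are `72` of
type I and `63` of type II, and each of the two families is a single `W(E₇)`-orbit. -/
theorem statement6 :
    (∀ A : Set V8, IsClFrame 8 A → C8TypeI A ∨ C8TypeII A) ∧
    {A : Set V8 | IsClFrame 8 A ∧ C8TypeI A}.ncard = 72 ∧
    {A : Set V8 | IsClFrame 8 A ∧ C8TypeII A}.ncard = 63 ∧
    (∀ w : V8 ≃ₗ[ℂ] V8, w ∈ WE7 → ∀ A : Set V8,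
      IsClFrame 8 A ∧ C8TypeI A → IsClFrame 8 (⇑w '' A) ∧ C8TypeI (⇑w '' A)) ∧
    (∀ A B : Set V8, IsClFrame 8 A ∧ C8TypeI A → IsClFrame 8 B ∧ C8TypeI B →
      ∃ w : V8 ≃ₗ[ℂ] V8, w ∈ WE7 ∧ ⇑w '' A = B) ∧
    (∀ w : V8 ≃ₗ[ℂ] V8, w ∈ WE7 → ∀ A : Set V8,
      IsClFrame 8 A ∧ C8TypeII A → IsClFrame 8 (⇑w '' A) ∧ C8TypeII (⇑w '' A)) ∧
    (∀ A B : Set V8, IsClFrame 8 A ∧ C8TypeII A → IsClFrame 8 B ∧ C8TypeII B →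
      ∃ w : V8 ≃ₗ[ℂ] V8, w ∈ WE7 ∧ ⇑w '' A = B) := by
  have resultI := count_and_orbit 4 RI baseI 6 C8TypeI (listFrame frameI)
    (fun _ hl => List.mem_of_mem_filter hl) RI_rep RI_pw RI_descend
    (fun _ hw _ hA => WE7_typeI hw hA) typeI_exists (listFrame_isFrame frameI_check)
    typeI_frameI baseI_mem
  have resultII := count_and_orbit 8 RII baseII 10 C8TypeII (listFrame frameII)
    (fun _ hl => List.mem_of_mem_filter hl) RII_rep RII_pw RII_descend
    (fun _ hw _ hA => WE7_typeII hw hA) typeII_exists (listFrame_isFrame frameII_check)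
    typeII_frameII baseII_mem
  refine ⟨fun A hA => frame_type hA, resultI.1.trans RI_length, resultII.1.trans RII_length,
    fun w hw A hA => ⟨WE7_frame hw hA.1, WE7_typeI hw hA.2⟩, resultI.2,
    fun w hw A hA => ⟨WE7_frame hw hA.1, WE7_typeII hw hA.2⟩, resultII.2⟩
end
end
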